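/- There exists a constant C > 0 such that for every finite field F, writing q = |F| and G = SL₂(F), the number of ordered pairs (x, y) ∈ G × G such that {x, y} invariably generates G differs from |G|²/2 by at most C·|G|²/q. -/

import Mathlib

/-- `{x, y}` invariably generates `G`: for all `g, h`, the conjugates
`g * x * g⁻¹` and `h * y * h⁻¹` generate `G`. -/
def InvGen {G : Type*} [Group G] (x y : G) : Prop :=
  ∀ g h : G, Subgroup.closure {g * x * g⁻¹, h * y * h⁻¹} = ⊤

/-!
Two facts about `G = SL(2, F)` give the count. First, the centralizers of noncentral elements are
abelian, so they meet pairwise in the center, and the centralizer of a regular semisimple element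
has index at most two in its normalizer. Hence the conjugates of one split torus and the conjugates
of one nonsplit torus are disjoint and each fill `|G| / 2 + O(|F|²)` elements. Two elements
lying over the same torus have commuting conjugates and do not generate invariably, so at most about
half of all pairs do.

Conversely, let `H` contain a split `x` and a nonsplit `y`, both of order at least 40. The same
count inside `H` leaves only unipotent elements (up to sign) outside the two tori, and the class
equation of `H`, following Dickson, leaves two possibilities for the orders of its tori: either `H`
is all of `G`, or `H` looks like `SL(2, Q)` or its normalizer, with `Q = p ^ m` and `Q² ≤ |F|`. In
the latter case `x ^ (2 * (Q - 1)) = 1` and `y ^ (2 * (Q + 1)) = 1`, which holds for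
`O(Q² * |F| ^ 4)` pairs; a geometric series bounds the total by `O(|F| ^ 5)`.
-/

section ConjugatesOfSet

variable {Γ : Type*} [Group Γ]

theorem ncard_conjugatesOfSet_eq_index_mul_ncard {D : Set Γ} {N : Subgroup Γ}
    (hDN : ∀ d ∈ D, ∀ g, g * d * g⁻¹ ∈ D ↔ g ∈ N) :
    (Group.conjugatesOfSet D).ncard = N.index * D.ncard := by
  let f : (Γ ⧸ N) × D → Γ := fun p ↦ p.1.out * p.2 * p.1.out⁻¹
  have hf : f.Injective := by
    rintro ⟨a, d⟩ ⟨b, e⟩ hab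
    have hconj : b.out⁻¹ * a.out * d * (b.out⁻¹ * a.out)⁻¹ = e := by
      have : a.out * d * a.out⁻¹ = b.out * e * b.out⁻¹ := hab
      rw [mul_inv_rev, inv_inv, show b.out⁻¹ * a.out * (d : Γ) * (a.out⁻¹ * b.out) =
        b.out⁻¹ * (a.out * d * a.out⁻¹) * b.out by group, this]
      group
    have hmem : b.out⁻¹ * a.out ∈ N := (hDN d d.2 _).1 (hconj ▸ e.2)
    obtain rfl : b = a := by
      rw [← b.out_eq', ← a.out_eq']
      exact QuotientGroup.eq.2 hmem
    exact Prod.ext rfl (Subtype.ext (by simpa using hconj))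
  have hrange : Set.range f = Group.conjugatesOfSet D := by
    ext u
    simp only [Set.mem_range, Group.mem_conjugatesOfSet_iff, isConj_iff, f]
    constructor
    · rintro ⟨⟨a, d⟩, rfl⟩
      exact ⟨d, d.2, _, rfl⟩
    · rintro ⟨d, hd, g, rfl⟩
      have hmem : (g : Γ ⧸ N).out⁻¹ * g ∈ N := QuotientGroup.eq.1 (QuotientGroup.out_eq' _)
      refine ⟨⟨g, _, (hDN d hd _).2 hmem⟩, ?_⟩
      group
  rw [← hrange, ← Set.image_univ, Set.ncard_image_of_injective _ hf, Set.ncard_univ,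
    Nat.card_prod, Nat.card_coe_set_eq, Subgroup.index]

theorem ncard_conjugatesOf_eq_index_centralizer (x : Γ) :
    (conjugatesOf x).ncard = (Subgroup.centralizer {x}).index := by
  have hunion : Group.conjugatesOfSet {x} = conjugatesOf x := by
    simp [Group.conjugatesOfSet]
  rw [← hunion, ncard_conjugatesOfSet_eq_index_mul_ncard (N := Subgroup.centralizer {x}),
    Set.ncard_singleton, mul_one]
  rintro d rfl g
  rw [Set.mem_singleton_iff, Subgroup.mem_centralizer_singleton_iff, mul_inv_eq_iff_eq_mul]

end ConjugatesOfSet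

/-- Groups in which the centralizer of every noncentral element is abelian; equivalently,
commutation is a transitive relation on the noncentral elements. -/
def HasAbelianCentralizers (Γ : Type*) [Group Γ] : Prop :=
  ∀ ⦃s : Γ⦄, s ∉ Subgroup.center Γ → ∀ ⦃a b : Γ⦄, Commute a s → Commute b s → Commute a b

/-- The union of the conjugates of the centralizer of `x`, with the center removed: the elements
of the conjugates of a torus when `x` generates that torus. -/
def centralizerConjugates {Γ : Type*} [Group Γ] (x : Γ) : Set Γ :=
  Group.conjugatesOfSet (Subgroup.centralizer {x} \ Subgroup.center Γ)

/-- The index of the centralizer of `x` in its normalizer: the order of the relative Weyl group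
when that centralizer is a torus. -/
noncomputable def weylIndex {Γ : Type*} [Group Γ] (x : Γ) : ℕ :=
  (Subgroup.centralizer {x}).relIndex (Subgroup.normalizer (Subgroup.centralizer {x}))

theorem conj_mem_center_iff {Γ : Type*} [Group Γ] {g s : Γ} :
    g * s * g⁻¹ ∈ Subgroup.center Γ ↔ s ∈ Subgroup.center Γ := by
  rw [Subgroup.Normal.mem_comm_iff inferInstance, inv_mul_cancel_left]

theorem mem_centralizerConjugates_iff {Γ : Type*} [Group Γ] {x s : Γ} :
    s ∈ centralizerConjugates x ↔ s ∉ Subgroup.center Γ ∧ ∃ h, Commute s (h * x * h⁻¹) := by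
  simp only [centralizerConjugates, Group.mem_conjugatesOfSet_iff, isConj_iff, Set.mem_sdiff,
    SetLike.mem_coe, Subgroup.mem_centralizer_singleton_iff]
  constructor
  · rintro ⟨d, ⟨hdx, hd⟩, h, rfl⟩
    exact ⟨conj_mem_center_iff.not.2 hd, h, (Commute.conj_iff h).2 hdx⟩
  · rintro ⟨hs, h, hsx⟩
    refine ⟨h⁻¹ * s * h, ⟨?_, ?_⟩, h, by group⟩
    · rw [← Commute.conj_iff h⁻¹] at hsx
      simpa [Commute, SemiconjBy, mul_assoc] using hsx
    · simpa using (conj_mem_center_iff (g := h⁻¹)).not.2 hs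

namespace HasAbelianCentralizers

open Subgroup

variable {Γ : Type*} [Group Γ] {x y s : Γ}

theorem subgroup (hΓ : HasAbelianCentralizers Γ) (H : Subgroup Γ) : HasAbelianCentralizers H := by
  intro s hs a b ha hb
  have hs' : (s : Γ) ∉ center Γ := fun h ↦
    hs (mem_center_iff.2 fun g ↦ Subtype.ext (mem_center_iff.1 h g))
  exact Subtype.ext (hΓ hs' (congrArg Subtype.val ha) (congrArg Subtype.val hb))

theorem center_subgroup (hΓ : HasAbelianCentralizers Γ) {H : Subgroup Γ} {x y : H}
    (hxy : ¬Commute x y) : center H = (center Γ).subgroupOf H := by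
  ext s
  rw [mem_subgroupOf]
  refine ⟨fun hs ↦ ?_, fun hs ↦ mem_center_iff.2 fun g ↦ Subtype.ext (mem_center_iff.1 hs g)⟩
  by_contra hs'
  exact hxy (Subtype.ext (hΓ hs' (congrArg Subtype.val (mem_center_iff.1 hs x))
    (congrArg Subtype.val (mem_center_iff.1 hs y))))

theorem centralizer_eq (hΓ : HasAbelianCentralizers Γ) (hs : s ∉ center Γ) (hx : x ∉ center Γ)
    (hsx : Commute s x) : centralizer {s} = centralizer {x} := by
  ext a
  rw [mem_centralizer_singleton_iff, mem_centralizer_singleton_iff]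
  exact ⟨fun has ↦ hΓ hs has hsx.symm, fun hax ↦ hΓ hx hax hsx⟩

theorem mem_normalizer_centralizer_iff (hΓ : HasAbelianCentralizers Γ) (hs : s ∉ center Γ)
    (hx : x ∉ center Γ) (hsx : Commute s x) (g : Γ) :
    g ∈ normalizer (centralizer {x}) ↔ Commute (g * s * g⁻¹) x := by
  have hsg : g * s * g⁻¹ ∉ center Γ := conj_mem_center_iff.not.2 hs
  rw [mem_normalizer_iff]
  constructor
  · intro hg
    exact mem_centralizer_singleton_iff.1 ((hg s).1 (mem_centralizer_singleton_iff.2 hsx))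
  · intro hgx a
    rw [← hΓ.centralizer_eq hs hx hsx, mem_centralizer_singleton_iff, hΓ.centralizer_eq hs hx hsx,
      ← hΓ.centralizer_eq hsg hx hgx, mem_centralizer_singleton_iff]
    exact (Commute.conj_iff g).symm

/-- Distinct centralizers of noncentral elements meet in the center, so the conjugates of a
centralizer are counted by the cosets of its normalizer. -/
theorem ncard_centralizerConjugates [Finite Γ] (hΓ : HasAbelianCentralizers Γ)
    (hx : x ∉ center Γ) :
    weylIndex x * (centralizerConjugates x).ncard * Nat.card (centralizer {x})
      + Nat.card Γ * Nat.card (center Γ) = Nat.card Γ * Nat.card (centralizer {x}) := by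
  set Z := center Γ
  set C := centralizer {x}
  have hT : (centralizerConjugates x).ncard =
      (normalizer (C : Set Γ)).index * ((C : Set Γ) \ Z).ncard := by
    refine ncard_conjugatesOfSet_eq_index_mul_ncard fun d ⟨hdC, hdZ⟩ g ↦ ?_
    rw [hΓ.mem_normalizer_centralizer_iff hdZ hx (mem_centralizer_singleton_iff.1 hdC)]
    exact ⟨fun h ↦ mem_centralizer_singleton_iff.1 h.1,
      fun h ↦ ⟨mem_centralizer_singleton_iff.2 h, conj_mem_center_iff.not.2 hdZ⟩⟩
  have hCZ : ((C : Set Γ) \ Z).ncard + Nat.card Z = Nat.card C := by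
    exact Set.ncard_sdiff_add_ncard_of_subset (center_le_centralizer {x})
  have hindex : weylIndex x * (normalizer (C : Set Γ)).index = C.index :=
    relIndex_mul_index le_normalizer
  rw [hT, ← C.card_mul_index, ← hindex, ← hCZ]
  ring

theorem mul_card_le_mul_ncard_centralizerConjugates [Finite Γ] (hΓ : HasAbelianCentralizers Γ)
    (hx : x ∉ center Γ) {k : ℕ} (hk : (k + 1) * Nat.card (center Γ) ≤ Nat.card (centralizer {x})) :
    k * Nat.card Γ ≤ (k + 1) * (weylIndex x * (centralizerConjugates x).ncard) := by
  have hcard := hΓ.ncard_centralizerConjugates hx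
  have hle := Nat.mul_le_mul_left (Nat.card Γ) hk
  refine Nat.le_of_mul_le_mul_right ?_ (Nat.card_pos (α := centralizer {x}))
  nlinarith [congrArg ((k + 1) * ·) hcard]

theorem disjoint_centralizerConjugates (hΓ : HasAbelianCentralizers Γ)
    (hxy : ∀ h, ¬Commute x (h * y * h⁻¹)) :
    Disjoint (centralizerConjugates x) (centralizerConjugates y) := by
  rw [Set.disjoint_left]
  intro s hsx hsy
  obtain ⟨hs, g, hg⟩ := mem_centralizerConjugates_iff.1 hsx
  obtain ⟨-, h, hh⟩ := mem_centralizerConjugates_iff.1 hsy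
  have hcomm := (Commute.conj_iff g⁻¹).2 (hΓ hs hg.symm hh.symm)
  exact hxy (g⁻¹ * h) (by simpa [mul_assoc] using hcomm)

theorem two_mul_card_center_le [Finite Γ] (hx : x ∉ center Γ) :
    2 * Nat.card (center Γ) ≤ Nat.card (centralizer {x}) := by
  have hle : center Γ ≤ centralizer {x} := center_le_centralizer _
  have hne : (center Γ).relIndex (centralizer {x}) ≠ 1 := fun h ↦
    hx (relIndex_eq_one.1 h (mem_centralizer_singleton_iff.2 rfl))
  have hmul := relIndex_mul_relIndex ⊥ (center Γ) (centralizer {x}) bot_le hle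
  simp only [relIndex_bot_left] at hmul
  have hpos := Nat.pos_of_dvd_of_pos (relIndex_dvd_card (center Γ) (centralizer {x})) Nat.card_pos
  rw [← hmul, mul_comm]
  exact Nat.mul_le_mul_left _ (by lia)

theorem weylIndex_pos [Finite Γ] : 0 < weylIndex x :=
  Nat.pos_of_dvd_of_pos (relIndex_dvd_card _ _) Nat.card_pos

theorem card_centralizer_of_mem_centralizerConjugates (hΓ : HasAbelianCentralizers Γ)
    (hx : x ∉ center Γ) (hs : s ∈ centralizerConjugates x) :
    Nat.card (centralizer {s}) = Nat.card (centralizer {x}) := by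
  obtain ⟨hsc, h, hsx⟩ := mem_centralizerConjugates_iff.1 hs
  have hmap : (centralizer {x}).map (MulAut.conj h).toMonoidHom = centralizer {h * x * h⁻¹} := by
    ext a
    rw [mem_map_equiv, mem_centralizer_singleton_iff, mem_centralizer_singleton_iff]
    change Commute ((MulAut.conj h).symm a) x ↔ Commute a (h * x * h⁻¹)
    rw [MulAut.conj_symm_apply, ← Commute.conj_iff h]
    simp only [mul_assoc, mul_inv_cancel_left, mul_inv_cancel, mul_one]
  rw [hΓ.centralizer_eq hsc (conj_mem_center_iff.not.2 hx) hsx, ← hmap,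
    card_map_of_injective (MulAut.conj h).injective]

theorem weylIndex_le_two (hΓ : HasAbelianCentralizers Γ) (hx : x ∉ center Γ)
    (hinv : ∀ h, Commute (h * x * h⁻¹) x → h * x * h⁻¹ = x ∨ h * x * h⁻¹ = x⁻¹) :
    weylIndex x ≤ 2 := by
  let N := normalizer (centralizer {x} : Set Γ)
  let f : N ⧸ (centralizer {x}).subgroupOf N → ({x, x⁻¹} : Set Γ) := fun q ↦
    ⟨q.out * x * (q.out : Γ)⁻¹,
      hinv _ ((hΓ.mem_normalizer_centralizer_iff hx hx rfl _).1 q.out.2)⟩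
  have hf : f.Injective := by
    intro q r hqr
    have hconj : (q.out : Γ) * x * (q.out : Γ)⁻¹ = r.out * x * (r.out : Γ)⁻¹ :=
      congrArg Subtype.val hqr
    rw [← q.out_eq', ← r.out_eq']
    refine QuotientGroup.eq.2 (mem_subgroupOf.2 (mem_centralizer_singleton_iff.2 ?_))
    calc (q.out : Γ)⁻¹ * r.out * x
        = (q.out : Γ)⁻¹ * (r.out * x * (r.out : Γ)⁻¹) * r.out := by group
      _ = x * ((q.out : Γ)⁻¹ * r.out) := by rw [← hconj]; group
  have hcard := Nat.card_le_card_of_injective f hf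
  rw [Nat.card_coe_set_eq] at hcard
  exact hcard.trans ((Set.ncard_insert_le _ _).trans_eq (by rw [Set.ncard_singleton]))

theorem not_commute_conj_symm (hxy : ∀ h, ¬Commute x (h * y * h⁻¹)) (h : Γ) :
    ¬Commute y (h * x * h⁻¹) := fun hyx ↦
  hxy h⁻¹ (by simpa [mul_assoc] using ((Commute.conj_iff h⁻¹).2 hyx).symm)

theorem notMem_center_of_not_commute_conj (hxy : ∀ h, ¬Commute x (h * y * h⁻¹)) :
    x ∉ center Γ := fun hx ↦ hxy 1 (mem_center_iff.1 hx _).symm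

theorem weylIndex_eq_two [Finite Γ] (hΓ : HasAbelianCentralizers Γ)
    (hxy : ∀ h, ¬Commute x (h * y * h⁻¹))
    (hx : 20 * Nat.card (center Γ) ≤ Nat.card (centralizer {x}))
    (hy : 20 * Nat.card (center Γ) ≤ Nat.card (centralizer {y}))
    (hwx : weylIndex x ≤ 2) (hwy : weylIndex y ≤ 2) : weylIndex x = 2 := by
  have hdx := hΓ.mul_card_le_mul_ncard_centralizerConjugates
    (notMem_center_of_not_commute_conj hxy) hx
  have hdy := hΓ.mul_card_le_mul_ncard_centralizerConjugates
    (notMem_center_of_not_commute_conj (not_commute_conj_symm hxy)) hy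
  have hsum := Set.ncard_le_card (centralizerConjugates x ∪ centralizerConjugates y)
  rw [Set.ncard_union_eq (hΓ.disjoint_centralizerConjugates hxy)] at hsum
  have hpos : 0 < Nat.card Γ := Nat.card_pos
  have hwx_pos : 0 < weylIndex x := weylIndex_pos
  have hwy_mul := Nat.mul_le_mul_right (centralizerConjugates y).ncard hwy
  by_contra hne
  rw [show weylIndex x = 1 by lia] at hdx
  lia

/-- The conjugates of two large centralizers already cover more than `19 / 20` of the group, which
leaves no room for a third one. -/
theorem mem_centralizerConjugates_of_weylIndex_le_two [Finite Γ] (hΓ : HasAbelianCentralizers Γ)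
    (hxy : ∀ h, ¬Commute x (h * y * h⁻¹))
    (hx : 20 * Nat.card (center Γ) ≤ Nat.card (centralizer {x}))
    (hy : 20 * Nat.card (center Γ) ≤ Nat.card (centralizer {y}))
    (hwx : weylIndex x ≤ 2) (hwy : weylIndex y ≤ 2) (hs : s ∉ center Γ) (hws : weylIndex s ≤ 2) :
    s ∈ centralizerConjugates x ∪ centralizerConjugates y := by
  by_contra hsxy
  simp only [Set.mem_union, mem_centralizerConjugates_iff, not_or, not_and, not_exists] at hsxy
  have hdx := hΓ.mul_card_le_mul_ncard_centralizerConjugates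
    (notMem_center_of_not_commute_conj hxy) hx
  have hdy := hΓ.mul_card_le_mul_ncard_centralizerConjugates
    (notMem_center_of_not_commute_conj (not_commute_conj_symm hxy)) hy
  have hds := hΓ.mul_card_le_mul_ncard_centralizerConjugates (k := 1) hs (two_mul_card_center_le hs)
  have hdisj : Disjoint (centralizerConjugates s)
      (centralizerConjugates x ∪ centralizerConjugates y) :=
    Set.disjoint_union_right.2 ⟨hΓ.disjoint_centralizerConjugates (hsxy.1 hs),
      hΓ.disjoint_centralizerConjugates (hsxy.2 hs)⟩
  have hsum := Set.ncard_le_card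
    (centralizerConjugates s ∪ (centralizerConjugates x ∪ centralizerConjugates y))
  rw [Set.ncard_union_eq hdisj,
    Set.ncard_union_eq (hΓ.disjoint_centralizerConjugates hxy)] at hsum
  have hpos : 0 < Nat.card Γ := Nat.card_pos
  have hwx_mul := Nat.mul_le_mul_right (centralizerConjugates x).ncard hwx
  have hwy_mul := Nat.mul_le_mul_right (centralizerConjugates y).ncard hwy
  have hws_mul := Nat.mul_le_mul_right (centralizerConjugates s).ncard hws
  lia

theorem card_eq_card_center_add [Finite Γ] (hΓ : HasAbelianCentralizers Γ)
    (hxy : ∀ h, ¬Commute x (h * y * h⁻¹)) {U : Set Γ}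
    (hU : ∀ s, s ∈ U ↔ s ∉ center Γ ∧ s ∉ centralizerConjugates x ∪ centralizerConjugates y) :
    Nat.card Γ = Nat.card (center Γ) + (centralizerConjugates x).ncard +
      (centralizerConjugates y).ncard + U.ncard := by
  have hdisj : Disjoint (center Γ : Set Γ)
      (centralizerConjugates x ∪ centralizerConjugates y) := by
    rw [Set.disjoint_union_right, Set.disjoint_right, Set.disjoint_right]
    exact ⟨fun s hs ↦ (mem_centralizerConjugates_iff.1 hs).1,
      fun s hs ↦ (mem_centralizerConjugates_iff.1 hs).1⟩
  have hUc : U = (center Γ ∪ (centralizerConjugates x ∪ centralizerConjugates y) : Set Γ)ᶜ := by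
    ext s
    simp only [hU, Set.mem_compl_iff, Set.mem_union, SetLike.mem_coe, not_or]
  rw [hUc, add_assoc (Nat.card (center Γ)),
    ← Set.ncard_union_eq (hΓ.disjoint_centralizerConjugates hxy), ← Set.ncard_add_ncard_compl,
    Set.ncard_union_eq hdisj]
  rfl

/-- The class equation of a group covered by its center, the conjugates of two centralizers of
relative Weyl group of order two, and a remainder `U`. -/
theorem two_mul_card_mul_card_mul_ncard_add [Finite Γ] (hΓ : HasAbelianCentralizers Γ)
    (hxy : ∀ h, ¬Commute x (h * y * h⁻¹)) (hwx : weylIndex x = 2) (hwy : weylIndex y = 2)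
    {U : Set Γ}
    (hU : ∀ s, s ∈ U ↔ s ∉ center Γ ∧ s ∉ centralizerConjugates x ∪ centralizerConjugates y) :
    2 * Nat.card (centralizer {x}) * Nat.card (centralizer {y}) *
        (U.ncard + Nat.card (center Γ)) =
      Nat.card Γ * Nat.card (center Γ) *
        (Nat.card (centralizer {x}) + Nat.card (centralizer {y})) := by
  have hx := hΓ.ncard_centralizerConjugates (notMem_center_of_not_commute_conj hxy)
  have hy := hΓ.ncard_centralizerConjugates
    (notMem_center_of_not_commute_conj (not_commute_conj_symm hxy))
  have hsum := hΓ.card_eq_card_center_add hxy hU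
  rw [hwx] at hx
  rw [hwy] at hy
  zify at hx hy hsum ⊢
  linear_combination -2 * (Nat.card (centralizer {x}) : ℤ) * Nat.card (centralizer {y}) * hsum -
    Nat.card (centralizer {y}) * hx - Nat.card (centralizer {x}) * hy

end HasAbelianCentralizers

namespace SLTwo

open Subgroup
open Matrix.SpecialLinearGroup (transvection transvection_coe)
open scoped MatrixGroups

section Basic

variable {F : Type*} [Field F] {M s x y : SL(2, F)}

theorem det_eq_one (M : SL(2, F)) : M 0 0 * M 1 1 - M 0 1 * M 1 0 = 1 := by
  simpa only [Matrix.det_fin_two] using M.det_coe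

theorem mul_apply (M N : SL(2, F)) (i j : Fin 2) : (M * N) i j = M i 0 * N 0 j + M i 1 * N 1 j := by
  rw [Matrix.SpecialLinearGroup.coe_mul, Matrix.mul_apply, Fin.sum_univ_two]

theorem ext_entries {M N : SL(2, F)} (h₀₀ : M 0 0 = N 0 0) (h₀₁ : M 0 1 = N 0 1)
    (h₁₀ : M 1 0 = N 1 0) (h₁₁ : M 1 1 = N 1 1) : M = N := by
  ext i j
  fin_cases i <;> fin_cases j <;> assumption

theorem inv_entries (M : SL(2, F)) :
    M⁻¹ 0 0 = M 1 1 ∧ M⁻¹ 0 1 = -M 0 1 ∧ M⁻¹ 1 0 = -M 1 0 ∧ M⁻¹ 1 1 = M 0 0 := by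
  simp [Matrix.adjugate_fin_two]

theorem mem_center_iff_entries : M ∈ center SL(2, F) ↔ M 0 1 = 0 ∧ M 1 0 = 0 ∧ M 0 0 = M 1 1 := by
  rw [Matrix.SpecialLinearGroup.mem_center_iff]
  constructor
  · rintro ⟨r, -, hr⟩
    simp [← hr]
  · rintro ⟨h₀₁, h₁₀, h₀₀⟩
    refine ⟨M 0 0, ?_, ?_⟩
    · rw [Fintype.card_fin]
      linear_combination det_eq_one M + M 0 0 * h₀₀ + M 0 1 * h₁₀
    · ext i j
      fin_cases i <;> fin_cases j <;> simp [h₀₁, h₁₀, h₀₀]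

theorem card_center_le_two : Nat.card (center SL(2, F)) ≤ 2 := by
  rw [Nat.card_congr
    (Matrix.SpecialLinearGroup.center_equiv_rootsOfUnity' (0 : Fin 2)).toEquiv]
  simpa using card_rootsOfUnity F 2

/-- The centralizer of a noncentral element is contained in the algebra it generates. -/
theorem exists_entries_eq_of_commute (hs : s ∉ center SL(2, F)) (h : Commute M s) :
    ∃ l m : F, M 0 0 = l * s 0 0 + m ∧ M 0 1 = l * s 0 1 ∧ M 1 0 = l * s 1 0 ∧
      M 1 1 = l * s 1 1 + m := by
  have hMs (i j : Fin 2) : M i 0 * s 0 j + M i 1 * s 1 j = s i 0 * M 0 j + s i 1 * M 1 j := by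
    rw [← mul_apply, ← mul_apply, h.eq]
  have h₀₀ := hMs 0 0
  have h₀₁ := hMs 0 1
  have h₁₀ := hMs 1 0
  rw [mem_center_iff_entries] at hs
  by_cases hs₀₁ : s 0 1 = 0
  · by_cases hs₁₀ : s 1 0 = 0
    · have hs₁₁ : s 0 0 - s 1 1 ≠ 0 := fun hc ↦ hs ⟨hs₀₁, hs₁₀, sub_eq_zero.1 hc⟩
      refine ⟨(M 0 0 - M 1 1) / (s 0 0 - s 1 1),
        M 0 0 - (M 0 0 - M 1 1) / (s 0 0 - s 1 1) * s 0 0, ?_, ?_, ?_, ?_⟩ <;> field_simp <;> grind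
    · refine ⟨M 1 0 / s 1 0, M 0 0 - M 1 0 / s 1 0 * s 0 0, ?_, ?_, ?_, ?_⟩ <;> field_simp <;> grind
  · refine ⟨M 0 1 / s 0 1, M 0 0 - M 0 1 / s 0 1 * s 0 0, ?_, ?_, ?_, ?_⟩ <;> field_simp <;> grind

theorem hasAbelianCentralizers : HasAbelianCentralizers SL(2, F) := by
  intro s hs a b ha hb
  obtain ⟨l, m, h₀₀, h₀₁, h₁₀, h₁₁⟩ := exists_entries_eq_of_commute hs ha
  obtain ⟨l', m', h₀₀', h₀₁', h₁₀', h₁₁'⟩ := exists_entries_eq_of_commute hs hb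
  apply ext_entries <;> simp only [mul_apply, h₀₀, h₀₁, h₁₀, h₁₁, h₀₀', h₀₁', h₁₀', h₁₁'] <;> ring

theorem trace_eq (M : SL(2, F)) : M.1.trace = M 0 0 + M 1 1 := Matrix.trace_fin_two _

theorem trace_conj (g M : SL(2, F)) : (g * M * g⁻¹).1.trace = M.1.trace := by
  rw [Matrix.SpecialLinearGroup.coe_mul, Matrix.trace_mul_comm,
    ← Matrix.SpecialLinearGroup.coe_mul, inv_mul_cancel_left]

theorem notMem_center_of_trace_sq_ne (hs : s.1.trace ^ 2 ≠ 4) : s ∉ center SL(2, F) := by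
  rw [mem_center_iff_entries]
  rintro ⟨h₀₁, -, h₀₀⟩
  refine hs ?_
  rw [trace_eq]
  linear_combination 4 * det_eq_one s + (s 0 0 - s 1 1) * h₀₀ + 4 * s 1 0 * h₀₁

theorem trace_sq_ne_of_commute (hs : s ∉ center SL(2, F)) (h : Commute M s)
    (hM : M.1.trace ^ 2 ≠ 4) : s.1.trace ^ 2 ≠ 4 := by
  obtain ⟨l, m, h₀₀, h₀₁, h₁₀, h₁₁⟩ := exists_entries_eq_of_commute hs h
  have hdet := det_eq_one M
  have hdets := det_eq_one s
  refine fun hts ↦ hM ?_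
  rw [trace_eq] at hts ⊢
  rw [h₀₀, h₀₁, h₁₀, h₁₁] at hdet
  rw [h₀₀, h₁₁]
  linear_combination l ^ 2 * hts + 4 * hdet - 4 * l ^ 2 * hdets

theorem eq_or_eq_inv_of_commute (hs : s.1.trace ^ 2 ≠ 4) (htr : M.1.trace = s.1.trace)
    (h : Commute M s) : M = s ∨ M = s⁻¹ := by
  obtain ⟨l, m, h₀₀, h₀₁, h₁₀, h₁₁⟩ :=
    exists_entries_eq_of_commute (notMem_center_of_trace_sq_ne hs) h
  have hdet := det_eq_one M
  have hdets := det_eq_one s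
  rw [trace_eq] at hs
  rw [trace_eq, trace_eq, h₀₀, h₁₁] at htr
  rw [h₀₀, h₀₁, h₁₀, h₁₁] at hdet
  have hl : (l - 1) * (l + 1) = 0 := by
    refine (mul_eq_zero.1 ?_).resolve_left (sub_ne_zero.2 hs)
    grind
  have hlm : (l = 1 ∧ m = 0) ∨ (l = -1 ∧ m = s 0 0 + s 1 1) := by grind
  rcases hlm with ⟨rfl, rfl⟩ | ⟨rfl, rfl⟩
  · left; apply ext_entries <;> grind
  · right; apply ext_entries <;> simp only [inv_entries] <;> grind

end Basic

section Split

variable {F : Type*} [Field F] {M s x y : SL(2, F)}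

/-- `M` has an eigenvalue in `F`, stated through the factorisation of its characteristic
polynomial as `(X - a) (X - a⁻¹)`. -/
def IsSplit (M : SL(2, F)) : Prop := ∃ a : Fˣ, (a : F) + (a⁻¹ : Fˣ) = M.1.trace

theorem isSplit_iff : IsSplit M ↔ ∃ a : F, a ^ 2 - M.1.trace * a + 1 = 0 := by
  constructor
  · rintro ⟨a, ha⟩
    refine ⟨a, ?_⟩
    rw [← ha]
    linear_combination -a.mul_inv
  · rintro ⟨a, ha⟩
    have ha₀ : a ≠ 0 := by rintro rfl; simp at ha
    refine ⟨Units.mk0 a ha₀, ?_⟩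
    simp only [Units.val_inv_eq_inv_val, Units.val_mk0]
    field_simp
    linear_combination ha

theorem IsSplit.of_commute (hsplit : IsSplit s) (hs : s ∉ center SL(2, F)) (h : Commute M s) :
    IsSplit M := by
  obtain ⟨l, m, h₀₀, h₀₁, h₁₀, h₁₁⟩ := exists_entries_eq_of_commute hs h
  obtain ⟨a, ha⟩ := isSplit_iff.1 hsplit
  have hdet := det_eq_one M
  have hdets := det_eq_one s
  refine isSplit_iff.2 ⟨l * a + m, ?_⟩
  rw [trace_eq] at ha ⊢
  rw [h₀₀, h₀₁, h₁₀, h₁₁] at hdet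
  rw [h₀₀, h₁₁]
  linear_combination l ^ 2 * ha - hdet + l ^ 2 * hdets

theorem isSplit_conj (g : SL(2, F)) : IsSplit (g * M * g⁻¹) ↔ IsSplit M := by
  rw [IsSplit, IsSplit, trace_conj]

theorem not_commute_conj_of_isSplit_of_not_isSplit (hx : IsSplit x) (hxc : x ∉ center SL(2, F))
    (hy : ¬IsSplit y) (h : SL(2, F)) : ¬Commute x (h * y * h⁻¹) := fun hxy ↦
  hy ((isSplit_conj h).1 (hx.of_commute hxc hxy.symm))

end Split

section Borel

variable {F : Type*} [Field F] {M b u : SL(2, F)}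

variable (F) in
/-- The Borel subgroup of upper triangular matrices. -/
def borel : Subgroup SL(2, F) where
  carrier := {M | M 1 0 = 0}
  mul_mem' {a b} (ha : a 1 0 = 0) (hb : b 1 0 = 0) := show (a * b) 1 0 = 0 by
    simp [mul_apply, ha, hb]
  one_mem' := by simp
  inv_mem' {a} (ha : a 1 0 = 0) := show a⁻¹ 1 0 = 0 by
    rw [(inv_entries a).2.2.1, ha, neg_zero]

theorem mem_borel : M ∈ borel F ↔ M 1 0 = 0 := Iff.rfl

theorem mul_eq_one_of_mem_borel (hM : M ∈ borel F) : M 0 0 * M 1 1 = 1 := by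
  linear_combination det_eq_one M + M 0 1 * mem_borel.1 hM

theorem isSplit_of_mem_borel (hM : M ∈ borel F) : IsSplit M := by
  refine isSplit_iff.2 ⟨M 0 0, ?_⟩
  rw [trace_eq]
  linear_combination -mul_eq_one_of_mem_borel hM

theorem trace_sq_eq_four_iff_of_mem_borel (hM : M ∈ borel F) :
    M.1.trace ^ 2 = 4 ↔ M 0 0 ^ 2 = 1 := by
  have hdet := mul_eq_one_of_mem_borel hM
  rw [trace_eq]
  constructor
  · intro htr
    have hdiff : M 0 0 - M 1 1 = 0 := sq_eq_zero_iff.1 (by linear_combination htr - 4 * hdet)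
    linear_combination hdet + M 0 0 * hdiff
  · intro hsq
    have h₀₀ : M 0 0 = M 1 1 :=
      mul_left_cancel₀ (left_ne_zero_of_mul_eq_one hdet) (by linear_combination hsq - hdet)
    rw [← h₀₀]
    linear_combination 4 * hsq

theorem mem_borel_of_commute (hb : b ∈ borel F) (hbc : b ∉ center SL(2, F)) (h : Commute M b) :
    M ∈ borel F := by
  obtain ⟨l, m, -, -, h₁₀, -⟩ := exists_entries_eq_of_commute hbc h
  rw [mem_borel, h₁₀, mem_borel.1 hb, mul_zero]

/-- A parabolic element fixes a single point of the projective line. -/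
theorem mem_borel_of_conj_mem_borel {g : SL(2, F)} (hu : u ∈ borel F)
    (huc : u ∉ center SL(2, F)) (htr : u.1.trace ^ 2 = 4) (h : g * u * g⁻¹ ∈ borel F) :
    g ∈ borel F := by
  have h₀₀ := (trace_sq_eq_four_iff_of_mem_borel hu).1 htr
  have hdet := mul_eq_one_of_mem_borel hu
  rw [mem_center_iff_entries] at huc
  simp only [mem_borel, mul_apply, inv_entries] at *
  grind

variable (F) in
/-- The eigenvalue of an upper triangular matrix on the line it fixes. -/
def borelCharacter : borel F →* Fˣ where
  toFun M := ⟨M.1 0 0, M.1 1 1, mul_eq_one_of_mem_borel M.2,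
    by rw [mul_comm]; exact mul_eq_one_of_mem_borel M.2⟩
  map_one' := by ext; simp
  map_mul' a b := by
    ext
    simp [mul_apply, mem_borel.1 b.2]

@[simp]
theorem borelCharacter_apply (M : borel F) : (borelCharacter F M : F) = M.1 0 0 := rfl

end Borel

section Transvection

variable {F : Type*} [Field F]

/-- The unipotent upper triangular matrix with upper right entry `t`. -/
abbrev upperTransvection (t : F) : SL(2, F) := transvection zero_ne_one t

theorem upperTransvection_entries (t : F) :
    upperTransvection t 0 0 = 1 ∧ upperTransvection t 0 1 = t ∧ upperTransvection t 1 0 = 0 ∧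
      upperTransvection t 1 1 = 1 := by
  simp [transvection_coe]

theorem upperTransvection_mem_borel (t : F) : upperTransvection t ∈ borel F :=
  (upperTransvection_entries t).2.2.1

theorem eq_upperTransvection {b : SL(2, F)} (hb : b ∈ borel F) (h₀₀ : b 0 0 = 1) :
    b = upperTransvection (b 0 1) := by
  have hdet := mul_eq_one_of_mem_borel hb
  rw [h₀₀, one_mul] at hdet
  apply ext_entries <;> simp only [upperTransvection_entries, mem_borel.1 hb, h₀₀, hdet]

theorem conj_upperTransvection {b : SL(2, F)} (hb : b ∈ borel F) (t : F) :
    b * upperTransvection t * b⁻¹ = upperTransvection (b 0 0 ^ 2 * t) := by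
  rw [mul_inv_eq_iff_eq_mul]
  have hdet := mul_eq_one_of_mem_borel hb
  rw [mem_borel] at hb
  apply ext_entries <;> simp only [mul_apply, upperTransvection_entries, hb] <;> grind

theorem eq_top_of_upperTransvection_mem {H : Subgroup SL(2, F)} {y : SL(2, F)}
    (hH : ∀ t, upperTransvection t ∈ H) (hy : y ∈ H) (hy₁₀ : y ∉ borel F) : H = ⊤ := by
  rw [mem_borel] at hy₁₀
  have hdet := det_eq_one y
  let w := upperTransvection (-y 0 0 / y 1 0) * y * upperTransvection (-y 1 1 / y 1 0)
  have hw : w ∈ H := mul_mem (mul_mem (hH _) hy) (hH _)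
  have hlower (t : F) : transvection one_ne_zero t ∈ H := by
    convert mul_mem (mul_mem hw (hH (-t / y 1 0 ^ 2))) (inv_mem hw) using 1
    rw [eq_mul_inv_iff_mul_eq]
    apply ext_entries <;> simp [w, mul_apply, transvection_coe] <;> field_simp <;> grind
  refine eq_top_iff.2 fun A _ ↦ Matrix.SL2.transvection_induction (· ∈ H) ?_ (fun _ _ ↦ mul_mem) A
  intro i j hij t
  fin_cases i <;> fin_cases j
  · exact absurd rfl hij
  · exact hH t
  · exact hlower t
  · exact absurd rfl hij

end Transvection

end SLTwo

theorem pow_char_eq_scalar {n R : Type*} [Fintype n] [DecidableEq n] [Nonempty n]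
    [CommRing R] {p : ℕ} [Fact p.Prime] [CharP R p] {A : Matrix n n R} {a : R}
    (hA : (A - Matrix.scalar n a) ^ 2 = 0) : A ^ p = Matrix.scalar n (a ^ p) := by
  have hcomm : Commute A (Matrix.scalar n a) := (Matrix.scalar_commute a (mul_comm a) A).symm
  have hpow := sub_pow_char_of_commute (p := p) hcomm
  rw [pow_eq_zero_of_le (Fact.out : p.Prime).two_le hA] at hpow
  rw [map_pow, sub_eq_zero.1 hpow.symm]

theorem card_subgroupOf {G : Type*} [Group G] (H K : Subgroup G) :
    Nat.card (H.subgroupOf K) = Nat.card (H ⊓ K : Subgroup G) := by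
  rw [← Subgroup.subgroupOf_map_subtype, Subgroup.card_map_of_injective K.subtype_injective]

theorem card_map_mul_card_ker_inf {G G' : Type*} [Group G] [Group G'] (f : G →* G')
    (K : Subgroup G) : Nat.card (K.map f) * Nat.card (f.ker ⊓ K : Subgroup G) = Nat.card K := by
  rw [← Subgroup.relIndex_ker, ← Subgroup.inf_relIndex_right, mul_comm,
    ← Subgroup.relIndex_bot_left, Subgroup.relIndex_mul_relIndex _ _ _ bot_le inf_le_right,
    Subgroup.relIndex_bot_left]

theorem card_dvd_ncard_of_forall_mul_mem {G : Type*} [Group G] {R : Subgroup G} {V : Set G}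
    (hV : ∀ v ∈ V, ∀ r ∈ R, v * r ∈ V) : Nat.card R ∣ V.ncard := by
  have hpre : QuotientGroup.mk ⁻¹' (QuotientGroup.mk (s := R) '' V) = V := by
    refine (Set.subset_preimage_image _ _).antisymm' ?_
    rintro w ⟨v, hv, hvw⟩
    simpa using hV v hv _ (QuotientGroup.eq.1 hvw)
  rw [← Nat.card_coe_set_eq, ← hpre,
    Nat.card_congr (QuotientGroup.preimageMkEquivSubgroupProdSet R _), Nat.card_prod]
  exact dvd_mul_right _ _

namespace SLTwo

open Subgroup
open scoped MatrixGroups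

section Parabolic

variable {F : Type*} [Field F] {u : SL(2, F)}

theorem isParabolic_iff : u.1.IsParabolic ↔ u ∉ center SL(2, F) ∧ u.1.trace ^ 2 = 4 := by
  rw [Matrix.IsParabolic, Matrix.discr_fin_two, u.2, Matrix.SpecialLinearGroup.mem_center_iff]
  refine and_congr (not_congr ⟨fun ⟨r, hr⟩ ↦ ⟨r, ?_, hr⟩, fun ⟨r, _, hr⟩ ↦ ⟨r, hr⟩⟩) ?_
  · simpa [← hr] using u.2
  · rw [mul_one, sub_eq_zero]

theorem isParabolic_conj (g : SL(2, F)) : (g * u * g⁻¹).1.IsParabolic ↔ u.1.IsParabolic := by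
  rw [isParabolic_iff, isParabolic_iff, conj_mem_center_iff, trace_conj]

theorem sub_scalar_sq_eq_zero {a : F} (ha : a ^ 2 = 1) (htr : u.1.trace = 2 * a) :
    (u.1 - Matrix.scalar (Fin 2) a) ^ 2 = 0 := by
  have hdet := det_eq_one u
  rw [trace_eq] at htr
  ext i j
  fin_cases i <;> fin_cases j <;> simp [sq, Matrix.mul_apply] <;> grind

variable {p : ℕ} [Fact p.Prime] [CharP F p]

variable (p) in
theorem pow_char_of_sq_eq_one {a : F} (ha : a ^ 2 = 1) : a ^ p = a := by
  obtain h | h := sq_eq_one_iff.1 ha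
  · rw [h, one_pow]
  · rw [h, neg_one_pow_char F p]

theorem pow_char_mem_center (htr : u.1.trace ^ 2 = 4) : u ^ p ∈ center SL(2, F) := by
  obtain ⟨a, ha, ha'⟩ : ∃ a : F, a ^ 2 = 1 ∧ u.1.trace = 2 * a := by
    by_cases h₂ : (2 : F) = 0
    · refine ⟨1, one_pow 2, ?_⟩
      rw [h₂, zero_mul, ← sq_eq_zero_iff, htr]
      linear_combination 2 * h₂
    · exact ⟨u.1.trace / 2, by field_simp; linear_combination htr, by field_simp⟩
  have hpow := pow_char_eq_scalar (p := p) (sub_scalar_sq_eq_zero ha ha')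
  rw [mem_center_iff_entries, Matrix.SpecialLinearGroup.coe_pow, hpow]
  simp

theorem pow_char_of_mem_center {z : SL(2, F)} (hz : z ∈ center SL(2, F)) : z ^ p = z := by
  obtain ⟨r, hr₂, hr⟩ := Matrix.SpecialLinearGroup.mem_center_iff.1 hz
  rw [Fintype.card_fin] at hr₂
  apply Subtype.ext
  rw [Matrix.SpecialLinearGroup.coe_pow, ← hr, ← map_pow, pow_char_of_sq_eq_one p hr₂]

end Parabolic

section BorelOfSubgroup

variable {F : Type*} [Field F] (H : Subgroup SL(2, F))

/-- The upper right entries of the unipotent upper triangular matrices in `H`. -/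
def translations : AddSubgroup F where
  carrier := {t | upperTransvection t ∈ H}
  zero_mem' := by simp [one_mem]
  add_mem' {a b} (ha : upperTransvection a ∈ H) (hb : upperTransvection b ∈ H) := by
    simpa [Matrix.SpecialLinearGroup.transvection_add] using mul_mem ha hb
  neg_mem' {a} (ha : upperTransvection a ∈ H) := by
    simpa [Matrix.SpecialLinearGroup.transvection_inv] using inv_mem ha

/-- The upper left entries of the upper triangular matrices in `H`. -/
def diagonalGroup : Subgroup Fˣ := (H.subgroupOf (borel F)).map (borelCharacter F)

variable {H}

theorem mem_translations {t : F} : t ∈ translations H ↔ upperTransvection t ∈ H := Iff.rfl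

theorem mem_diagonalGroup {a : Fˣ} : a ∈ diagonalGroup H ↔ ∃ b ∈ H, b ∈ borel F ∧ b 0 0 = a := by
  simp only [diagonalGroup, mem_map, mem_subgroupOf, Units.ext_iff, borelCharacter_apply]
  exact ⟨fun ⟨b, hb, ha⟩ ↦ ⟨b, hb, b.2, ha⟩, fun ⟨b, hb, hbB, ha⟩ ↦ ⟨⟨b, hbB⟩, hb, ha⟩⟩

theorem mem_ker_borelCharacter_inf {b : borel F} :
    b ∈ (borelCharacter F).ker ⊓ H.subgroupOf (borel F) ↔
      ∃ t ∈ translations H, upperTransvection t = b := by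
  simp only [mem_inf, MonoidHom.mem_ker, Units.ext_iff, borelCharacter_apply, Units.val_one,
    mem_subgroupOf]
  constructor
  · rintro ⟨h₀₀, hb⟩
    have hbt := eq_upperTransvection b.2 h₀₀
    exact ⟨_, mem_translations.2 (hbt ▸ hb), hbt.symm⟩
  · rintro ⟨t, ht, hbt⟩
    rw [← hbt]
    exact ⟨(upperTransvection_entries t).1, ht⟩

theorem upperTransvection_injective :
    (upperTransvection : F → SL(2, F)).Injective := fun t t' h ↦ by
  simpa [upperTransvection_entries] using congrArg (fun M : SL(2, F) ↦ M 0 1) h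

variable (H) in
theorem card_borel_subgroupOf : Nat.card ((borel F).subgroupOf H) =
    Nat.card (diagonalGroup H) * Nat.card (translations H) := by
  let f (t : F) : borel F := ⟨upperTransvection t, upperTransvection_mem_borel t⟩
  have hf : f.Injective := fun t t' h ↦
    upperTransvection_injective (congrArg Subtype.val h)
  have hker : f '' translations H =
      ((borelCharacter F).ker ⊓ H.subgroupOf (borel F) : Subgroup (borel F)) := by
    ext b
    rw [SetLike.mem_coe, mem_ker_borelCharacter_inf]
    simp [f, Subtype.ext_iff]
  have hcard := Nat.card_image_of_injective hf (translations H)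
  rw [hker] at hcard
  rw [card_subgroupOf, inf_comm, ← card_subgroupOf, ← card_map_mul_card_ker_inf (borelCharacter F),
    diagonalGroup]
  exact congrArg _ hcard

theorem center_le_borel : center SL(2, F) ≤ borel F := fun _ hz ↦ (mem_center_iff_entries.1 hz).2.1

theorem eq_of_mem_center {z w : SL(2, F)} (hz : z ∈ center SL(2, F)) (hw : w ∈ center SL(2, F))
    (h₀₀ : z 0 0 = w 0 0) : z = w := by
  obtain ⟨hz₀₁, hz₁₀, hz₁₁⟩ := mem_center_iff_entries.1 hz
  obtain ⟨hw₀₁, hw₁₀, hw₁₁⟩ := mem_center_iff_entries.1 hw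
  exact ext_entries h₀₀ (hz₀₁.trans hw₀₁.symm) (hz₁₀.trans hw₁₀.symm) (by rw [← hz₁₁, h₀₀, hw₁₁])

theorem eq_and_eq_of_mul_upperTransvection_eq {z w : SL(2, F)} (hz : z ∈ center SL(2, F))
    (hw : w ∈ center SL(2, F)) {t s : F} (h : z * upperTransvection t = w * upperTransvection s) :
    z = w ∧ t = s := by
  have h₀₀ : z 0 0 = w 0 0 := by
    simpa [mul_apply, upperTransvection_entries] using congrArg (fun M : SL(2, F) ↦ M 0 0) h
  obtain rfl := eq_of_mem_center hz hw h₀₀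
  exact ⟨rfl, upperTransvection_injective (mul_left_cancel h)⟩

theorem eq_pow_char_mul_upperTransvection (p : ℕ) [Fact p.Prime] [CharP F p] {b : SL(2, F)}
    (hb : b ∈ borel F) (hsq : b 0 0 ^ 2 = 1) : b = b ^ p * upperTransvection (b 0 0 * b 0 1) := by
  have h₁₁ : b 1 1 = b 0 0 := mul_left_cancel₀ (a := b 0 0) (by rintro h; simp [h] at hsq)
    (by rw [mul_eq_one_of_mem_borel hb, ← sq, hsq])
  have hpow := pow_char_eq_scalar (p := p)
    (sub_scalar_sq_eq_zero hsq (by rw [trace_eq, h₁₁, two_mul]))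
  rw [pow_char_of_sq_eq_one p hsq] at hpow
  rw [mem_borel] at hb
  apply ext_entries <;>
    simp only [mul_apply, upperTransvection_entries, Matrix.SpecialLinearGroup.coe_pow, hpow, hb,
      h₁₁, Matrix.scalar_apply, Matrix.diagonal_apply] <;> grind

theorem card_diagonalGroup [Finite F] :
    Nat.card (diagonalGroup H) = Nat.card ((diagonalGroup H).map (powMonoidHom 2)) *
      Nat.card ((center SL(2, F)).subgroupOf H) := by
  obtain ⟨p, _⟩ := CharP.exists F
  have : Fact p.Prime := ⟨CharP.char_is_prime F p⟩
  let χ : center SL(2, F) →* Fˣ := (borelCharacter F).comp (inclusion center_le_borel)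
  have hχ (z : center SL(2, F)) : (χ z : F) = z.1 0 0 := rfl
  have hinj : Function.Injective χ := by
    intro z w hzw
    have h₀₀ : z.1 0 0 = w.1 0 0 := congrArg Units.val hzw
    exact Subtype.ext (eq_of_mem_center z.2 w.2 h₀₀)
  have hker : (H.subgroupOf (center SL(2, F))).map χ =
      (powMonoidHom 2).ker ⊓ diagonalGroup H := by
    ext a
    simp only [mem_map, mem_subgroupOf, mem_inf, MonoidHom.mem_ker, powMonoidHom_apply,
      mem_diagonalGroup]
    constructor
    · rintro ⟨z, hz, rfl⟩
      refine ⟨?_, z, hz, center_le_borel z.2, rfl⟩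
      have hdet := mul_eq_one_of_mem_borel (center_le_borel z.2)
      rw [← (mem_center_iff_entries.1 z.2).2.2, ← sq] at hdet
      exact Units.ext hdet
    · rintro ⟨hsq, b, hb, hbB, hba⟩
      have hsq' : b 0 0 ^ 2 = 1 := by rw [hba, ← Units.val_pow_eq_pow_val, hsq, Units.val_one]
      refine ⟨⟨b ^ p, pow_char_mem_center ((trace_sq_eq_four_iff_of_mem_borel hbB).2 hsq')⟩,
        pow_mem hb p, Units.ext ?_⟩
      have hbp := congrArg (fun M : SL(2, F) ↦ M 0 0) (eq_pow_char_mul_upperTransvection p hbB hsq')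
      simpa [hχ, mul_apply, upperTransvection_entries, hba] using hbp.symm
  rw [← card_map_mul_card_ker_inf (powMonoidHom 2) (diagonalGroup H), ← hker,
    card_map_of_injective hinj, card_subgroupOf, card_subgroupOf, inf_comm]

theorem ncard_translations_units :
    {t : Fˣ | (t : F) ∈ translations H}.ncard = Nat.card (translations H) - 1 := by
  have himage : (fun t : Fˣ ↦ (t : F)) '' {t : Fˣ | (t : F) ∈ translations H} =
      (translations H : Set F) \ {0} := by
    ext t
    simp only [Set.mem_image, Set.mem_ofPred_eq, Set.mem_sdiff, SetLike.mem_coe,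
      Set.mem_singleton_iff]
    exact ⟨fun ⟨u, hu, hut⟩ ↦ hut ▸ ⟨hu, u.ne_zero⟩, fun ⟨ht, ht₀⟩ ↦ ⟨Units.mk0 t ht₀, ht, rfl⟩⟩
  rw [← Set.ncard_image_of_injective _ Units.val_injective, himage,
    Set.ncard_sdiff_singleton_of_mem (zero_mem _)]
  rfl

theorem card_diagonalGroup_sq_dvd :
    Nat.card ((diagonalGroup H).map (powMonoidHom 2)) ∣ Nat.card (translations H) - 1 := by
  rw [← ncard_translations_units]
  refine card_dvd_ncard_of_forall_mul_mem ?_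
  rintro t ht - ⟨a, ha, rfl⟩
  obtain ⟨b, hb, hbB, hba⟩ := mem_diagonalGroup.1 ha
  have hconj := mul_mem (mul_mem hb (mem_translations.1 ht)) (inv_mem hb)
  rw [conj_upperTransvection hbB, hba, mul_comm] at hconj
  exact hconj

theorem isParabolic_center_mul_upperTransvection {z : SL(2, F)} (hz : z ∈ center SL(2, F)) (t : F) :
    (z * upperTransvection t).1.IsParabolic ↔ t ≠ 0 := by
  have hdet := mul_eq_one_of_mem_borel (center_le_borel hz)
  rw [isParabolic_iff, trace_eq, mul_mem_cancel_left hz,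
    Matrix.SpecialLinearGroup.transvection_mem_center_iff]
  obtain ⟨h₀₁, h₁₀, h₀₀⟩ := mem_center_iff_entries.1 hz
  refine ⟨And.left, fun ht ↦ ⟨ht, ?_⟩⟩
  simp only [mul_apply, upperTransvection_entries, h₀₁, h₁₀]
  grind

theorem ncard_isParabolic_mem_borel [Finite F] :
    {u : H | u.1.1.IsParabolic ∧ u.1 ∈ borel F}.ncard =
      Nat.card ((center SL(2, F)).subgroupOf H) * (Nat.card (translations H) - 1) := by
  obtain ⟨p, _⟩ := CharP.exists F
  have : Fact p.Prime := ⟨CharP.char_is_prime F p⟩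
  let f : (center SL(2, F)).subgroupOf H × {t : Fˣ | (t : F) ∈ translations H} → H := fun a ↦
    a.1.1 * ⟨upperTransvection a.2.1, a.2.2⟩
  have hrange : Set.range f = {u : H | u.1.1.IsParabolic ∧ u.1 ∈ borel F} := by
    ext u
    constructor
    · rintro ⟨⟨⟨z, hz⟩, t⟩, rfl⟩
      exact ⟨(isParabolic_center_mul_upperTransvection hz _).2 t.1.ne_zero,
        mul_mem (center_le_borel hz) (upperTransvection_mem_borel _)⟩
    · rintro ⟨hu, huB⟩
      have htr := (isParabolic_iff.1 hu).2
      have hup := eq_pow_char_mul_upperTransvection p huB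
        ((trace_sq_eq_four_iff_of_mem_borel huB).1 htr)
      have hz := pow_char_mem_center (p := p) htr
      rw [hup, isParabolic_center_mul_upperTransvection hz] at hu
      have ht : u.1 0 0 * u.1 0 1 ∈ translations H := by
        rw [mem_translations, ← mul_mem_cancel_left (pow_mem u.2 p), ← hup]
        exact u.2
      exact ⟨⟨⟨u ^ p, hz⟩, Units.mk0 _ hu, ht⟩, Subtype.ext hup.symm⟩
  have hinj : f.Injective := by
    rintro ⟨⟨⟨z, hzH⟩, hz⟩, t, ht⟩ ⟨⟨⟨w, hwH⟩, hw⟩, s, hs⟩ hzw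
    obtain ⟨rfl, hts⟩ := eq_and_eq_of_mul_upperTransvection_eq hz hw (congrArg Subtype.val hzw)
    obtain rfl := Units.ext hts
    rfl
  rw [← hrange, ← Set.image_univ, Set.ncard_image_of_injective _ hinj, Set.ncard_univ,
    Nat.card_prod, ← ncard_translations_units, Nat.card_coe_set_eq]

end BorelOfSubgroup

section Sylow

variable {F : Type*} [Field F] {p : ℕ} [Fact p.Prime] [CharP F p]

theorem exists_conj_mem_borel_of_smul_eq {w : Fin 2 → F} (hw : w ≠ 0) :
    ∃ g : SL(2, F), ∀ a : SL(2, F), a • w = w → g * a * g⁻¹ ∈ borel F := by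
  have hcoprime : IsCoprime (w 0) (w 1) := by
    by_cases h₀ : w 0 = 0
    · have h₁ : w 1 ≠ 0 := fun h₁ ↦ hw (by ext i; fin_cases i <;> assumption)
      exact ⟨0, (w 1)⁻¹, by simp [h₁]⟩
    · exact ⟨(w 0)⁻¹, 0, by simp [h₀]⟩
  obtain ⟨A, hA⟩ := hcoprime.exists_SL2_col 0
  refine ⟨A⁻¹, fun a ha ↦ ?_⟩
  have h₀ : a 0 0 * A 0 0 + a 0 1 * A 1 0 = A 0 0 := by
    simpa [hA, Matrix.SpecialLinearGroup.smul_def, Matrix.mulVec, dotProduct] using congrFun ha 0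
  have h₁ : a 1 0 * A 0 0 + a 1 1 * A 1 0 = A 1 0 := by
    simpa [hA, Matrix.SpecialLinearGroup.smul_def, Matrix.mulVec, dotProduct] using congrFun ha 1
  simp only [mem_borel, mul_apply, inv_entries, inv_inv]
  linear_combination A 0 0 * h₁ - A 1 0 * h₀

theorem exists_conj_mem_borel_of_isPGroup [Finite F] {P : Subgroup SL(2, F)} (hP : IsPGroup p P) :
    ∃ g : SL(2, F), ∀ a ∈ P, g * a * g⁻¹ ∈ borel F := by
  have hcard : p ∣ Nat.card (Fin 2 → F) := by
    rw [Nat.card_fun, Nat.card_fin]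
    have := Fintype.ofFinite F
    have hp : p ∣ Nat.card F := by
      rw [Nat.card_eq_fintype_card, ← CharP.cast_eq_zero_iff F p, Nat.cast_card_eq_zero]
    exact dvd_pow hp two_ne_zero
  obtain ⟨w, hw, hw₀⟩ := hP.exists_fixed_point_of_prime_dvd_card_of_fixed_point (Fin 2 → F) hcard
    (a := 0) (fun a ↦ smul_zero _)
  obtain ⟨g, hg⟩ := exists_conj_mem_borel_of_smul_eq hw₀.symm
  exact ⟨g, fun a ha ↦ hg a (hw ⟨a, ha⟩)⟩

theorem exists_forall_isParabolic_conj_mem_borel [Finite F] (H : Subgroup SL(2, F)) :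
    ∃ g : SL(2, F), ∀ u ∈ H, u.1.IsParabolic → ∃ h ∈ H, g * (h * u * h⁻¹) * g⁻¹ ∈ borel F := by
  obtain ⟨p, _⟩ := CharP.exists F
  have : Fact p.Prime := ⟨CharP.char_is_prime F p⟩
  let P : Sylow p H := default
  obtain ⟨g, hg⟩ := exists_conj_mem_borel_of_isPGroup (P := P.1.map H.subtype) (P.2.map _)
  refine ⟨g, fun u hu huP ↦ ?_⟩
  obtain ⟨huc, htr⟩ := isParabolic_iff.1 huP
  have hz := pow_char_mem_center (p := p) htr
  let v : H := ⟨u, hu⟩ * (⟨u, hu⟩ ^ p)⁻¹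
  have hv : v ^ p = 1 := by
    have hcomm : Commute (⟨u, hu⟩ : H) ((⟨u, hu⟩ : H) ^ p)⁻¹ :=
      (Commute.refl _).pow_right p |>.inv_right
    rw [hcomm.mul_pow, inv_pow, mul_inv_eq_one]
    exact Subtype.ext (pow_char_of_mem_center hz).symm
  have hpgroup : IsPGroup p (zpowers v) := by
    rintro ⟨-, k, rfl⟩
    refine ⟨1, Subtype.ext ?_⟩
    change (v ^ k) ^ p ^ 1 = 1
    rw [pow_one, ← zpow_natCast, zpow_comm, zpow_natCast, hv, one_zpow]
  obtain ⟨Q, hQ⟩ := hpgroup.exists_le_sylow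
  obtain ⟨h, hh⟩ := MulAction.exists_smul_eq H Q P
  have hconj : g * (h * v * h⁻¹) * g⁻¹ ∈ borel F := by
    refine hg _ ⟨h * v * h⁻¹, ?_, rfl⟩
    rw [← hh]
    exact smul_mem_pointwise_smul v (MulAut.conj h) _ (hQ (mem_zpowers v))
  refine ⟨h, h.2, mem_borel_of_commute hconj ?_ ?_⟩
  · simpa only [conj_mem_center_iff, v, coe_mul, coe_inv, coe_pow,
      mul_mem_cancel_right (inv_mem hz)]
  · refine (Commute.conj_iff g).2 ((Commute.conj_iff (h : SL(2, F))).2 ?_)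
    exact (Commute.refl u).mul_right ((Commute.refl u).pow_right p).inv_right

end Sylow

end SLTwo

theorem mul_sub_lt_and_of_classEquation {N r s g : ℤ} (hN : 3 ≤ N) (hs : 20 ≤ s) (hsr : s ≤ r)
    (hg : 0 ≤ g) (h : 2 * g * (N * r + 1) = N * (r + 1) * (s + g)) :
    (r - 1) * (g - s) < 2 * s ∧ (g = s + 1 ∨ g = s + 2) := by
  have hW : N * (2 * s - (r - 1) * (g - s)) = 2 * g := by linear_combination -h
  set W := 2 * s - (r - 1) * (g - s) with hWdef
  have hWpos : 0 < W := by
    by_contra hW₀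
    have hg₀ : g = 0 := by nlinarith
    rw [hWdef, hg₀] at hW₀
    nlinarith
  have hWle : 3 * W ≤ 2 * g := by nlinarith
  have hsg : s < g := by
    by_contra hgs
    nlinarith
  have hgs : g < s + 3 := by
    by_contra hgs
    nlinarith
  exact ⟨by linarith, by lia⟩

/-- Solves the class equation of `HasAbelianCentralizers.two_mul_card_mul_card_mul_ncard_add` when
the remainder is made of `N` conjugates of a group of order `r + 1`. -/
theorem eq_or_two_mul_eq_of_classEquation {N r s g : ℕ} (hN : 3 ≤ N) (hs : 20 ≤ s) (hr : 0 < r)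
    (hsr : s ∣ r) (h : 2 * g * (N * r + 1) = N * (r + 1) * (s + g)) :
    (s = r ∧ g = r + 2) ∨ (2 * s = r ∧ 2 * g = r + 2) := by
  have hle : s ≤ r := Nat.le_of_dvd hr hsr
  zify at hN hs hle h
  obtain ⟨hlt, hg | hg⟩ :=
    mul_sub_lt_and_of_classEquation hN hs hle (Int.natCast_nonneg g) h
  · rw [hg] at hlt
    obtain ⟨j, rfl⟩ := hsr
    have hj : j = 1 ∨ j = 2 := by
      have : 0 < j := Nat.pos_of_mul_pos_left hr
      have : j ≤ 2 := by
        by_contra! hj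
        push_cast at hlt
        nlinarith
      lia
    rcases hj with rfl | rfl
    · have hfactor : ((s : ℤ) + 1) * (N - 2) = 0 := by
        rw [hg] at h
        push_cast at h
        linear_combination -h
      nlinarith
    · push_cast at *; right; constructor <;> lia
  · rw [hg] at hlt
    left; constructor <;> lia

namespace SLTwo

open Subgroup
open scoped MatrixGroups

section LargeTorusPair

variable {F : Type*} [Field F]

/-- `x` and `y` are regular semisimple of large order, `x` lying in a split torus and `y` in a
nonsplit one. The bound on the orders makes the two tori fill most of any subgroup containing
`x` and `y`. -/
structure IsLargeTorusPair (x y : SL(2, F)) : Prop where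
  isSplit_left : IsSplit x
  trace_sq_ne_left : x.1.trace ^ 2 ≠ 4
  not_isSplit_right : ¬IsSplit y
  le_orderOf_left : 40 ≤ orderOf x
  le_orderOf_right : 40 ≤ orderOf y

theorem trace_sq_ne_of_not_isSplit {y : SL(2, F)} (hy : ¬IsSplit y) : y.1.trace ^ 2 ≠ 4 := by
  refine fun htr ↦ hy (isSplit_iff.2 ?_)
  by_cases h₂ : (2 : F) = 0
  · exact ⟨1, by grind⟩
  · exact ⟨y.1.trace / 2, by grind⟩

theorem IsLargeTorusPair.conj {x y : SL(2, F)} (hxy : IsLargeTorusPair x y) (g h : SL(2, F)) :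
    IsLargeTorusPair (g * x * g⁻¹) (h * y * h⁻¹) where
  isSplit_left := (isSplit_conj g).2 hxy.isSplit_left
  trace_sq_ne_left := by rw [trace_conj]; exact hxy.trace_sq_ne_left
  not_isSplit_right := (isSplit_conj h).not.2 hxy.not_isSplit_right
  le_orderOf_left := hxy.le_orderOf_left.trans_eq ((MulAut.conj g).orderOf_eq x).symm
  le_orderOf_right := hxy.le_orderOf_right.trans_eq ((MulAut.conj h).orderOf_eq y).symm

variable {H : Subgroup SL(2, F)} {x y s u : H}

theorem weylIndex_le_two_of_trace_sq_ne (hsc : s ∉ center H) (hs : s.1.1.trace ^ 2 ≠ 4) :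
    weylIndex s ≤ 2 :=
  (hasAbelianCentralizers.subgroup H).weylIndex_le_two hsc fun _ hcomm ↦
    (eq_or_eq_inv_of_commute hs (trace_conj _ _) (congrArg Subtype.val hcomm)).imp
      Subtype.ext Subtype.ext

namespace IsLargeTorusPair

theorem not_commute_conj (hxy : IsLargeTorusPair x.1 y.1) (h : H) : ¬Commute x (h * y * h⁻¹) :=
  fun hcomm ↦ not_commute_conj_of_isSplit_of_not_isSplit hxy.isSplit_left
    (notMem_center_of_trace_sq_ne hxy.trace_sq_ne_left) hxy.not_isSplit_right h
    (congrArg Subtype.val hcomm)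

theorem center_eq (hxy : IsLargeTorusPair x.1 y.1) :
    center H = (center SL(2, F)).subgroupOf H :=
  hasAbelianCentralizers.center_subgroup (by simpa using hxy.not_commute_conj 1)

theorem notMem_center_left (hxy : IsLargeTorusPair x.1 y.1) : x ∉ center H :=
  HasAbelianCentralizers.notMem_center_of_not_commute_conj hxy.not_commute_conj

theorem notMem_center_right (hxy : IsLargeTorusPair x.1 y.1) : y ∉ center H :=
  HasAbelianCentralizers.notMem_center_of_not_commute_conj
    (HasAbelianCentralizers.not_commute_conj_symm hxy.not_commute_conj)

variable [Finite F]

theorem card_center_le (hxy : IsLargeTorusPair x.1 y.1) : Nat.card (center H) ≤ 2 := by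
  rw [hxy.center_eq, card_subgroupOf]
  exact (card_le_of_le inf_le_left).trans card_center_le_two

theorem mul_card_center_le_card_centralizer (hxy : IsLargeTorusPair x.1 y.1)
    (hs : 40 ≤ orderOf s.1) : 20 * Nat.card (center H) ≤ Nat.card (centralizer {s}) := by
  have hle : zpowers s ≤ centralizer {s} := by
    rw [zpowers_le, mem_centralizer_singleton_iff]
  calc 20 * Nat.card (center H) ≤ 40 := by have := hxy.card_center_le; lia
    _ ≤ Nat.card (zpowers s) := by rwa [Nat.card_zpowers, ← orderOf_coe]
    _ ≤ Nat.card (centralizer {s}) := card_le_of_le hle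

theorem weylIndex_left_eq_two (hxy : IsLargeTorusPair x.1 y.1) : weylIndex x = 2 :=
  (hasAbelianCentralizers.subgroup H).weylIndex_eq_two hxy.not_commute_conj
    (hxy.mul_card_center_le_card_centralizer hxy.le_orderOf_left)
    (hxy.mul_card_center_le_card_centralizer hxy.le_orderOf_right)
    (weylIndex_le_two_of_trace_sq_ne hxy.notMem_center_left hxy.trace_sq_ne_left)
    (weylIndex_le_two_of_trace_sq_ne hxy.notMem_center_right
      (trace_sq_ne_of_not_isSplit hxy.not_isSplit_right))

theorem weylIndex_right_eq_two (hxy : IsLargeTorusPair x.1 y.1) : weylIndex y = 2 :=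
  (hasAbelianCentralizers.subgroup H).weylIndex_eq_two
    (HasAbelianCentralizers.not_commute_conj_symm hxy.not_commute_conj)
    (hxy.mul_card_center_le_card_centralizer hxy.le_orderOf_right)
    (hxy.mul_card_center_le_card_centralizer hxy.le_orderOf_left)
    (weylIndex_le_two_of_trace_sq_ne hxy.notMem_center_right
      (trace_sq_ne_of_not_isSplit hxy.not_isSplit_right))
    (weylIndex_le_two_of_trace_sq_ne hxy.notMem_center_left hxy.trace_sq_ne_left)

theorem mem_centralizerConjugates (hxy : IsLargeTorusPair x.1 y.1) (hs : s ∉ center H)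
    (htr : s.1.1.trace ^ 2 ≠ 4) : s ∈ centralizerConjugates x ∪ centralizerConjugates y :=
  (hasAbelianCentralizers.subgroup H).mem_centralizerConjugates_of_weylIndex_le_two
    hxy.not_commute_conj
    (hxy.mul_card_center_le_card_centralizer hxy.le_orderOf_left)
    (hxy.mul_card_center_le_card_centralizer hxy.le_orderOf_right)
    hxy.weylIndex_left_eq_two.le hxy.weylIndex_right_eq_two.le hs
    (weylIndex_le_two_of_trace_sq_ne hs htr)

theorem isParabolic_iff_notMem (hxy : IsLargeTorusPair x.1 y.1) :
    s.1.1.IsParabolic ↔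
      s ∉ center H ∧ s ∉ centralizerConjugates x ∪ centralizerConjugates y := by
  have hcenter : s ∈ center H ↔ s.1 ∈ center SL(2, F) := by
    rw [hxy.center_eq, mem_subgroupOf]
  rw [isParabolic_iff, ← hcenter]
  refine and_congr_right fun hs ↦ ⟨fun htr hmem ↦ ?_,
    fun hmem ↦ not_ne_iff.1 fun htr ↦ hmem (hxy.mem_centralizerConjugates hs htr)⟩
  rcases hmem with hmem | hmem <;> obtain ⟨-, h, hcomm⟩ := mem_centralizerConjugates_iff.1 hmem
  · refine trace_sq_ne_of_commute (hcenter.not.1 hs) (congrArg Subtype.val hcomm.symm) ?_ htr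
    exact (trace_conj h.1 x.1).symm ▸ hxy.trace_sq_ne_left
  · refine trace_sq_ne_of_commute (hcenter.not.1 hs) (congrArg Subtype.val hcomm.symm) ?_ htr
    exact (trace_conj h.1 y.1).symm ▸ trace_sq_ne_of_not_isSplit hxy.not_isSplit_right

theorem classEquation (hxy : IsLargeTorusPair x.1 y.1) :
    2 * Nat.card (centralizer {x}) * Nat.card (centralizer {y}) *
        ({u : H | u.1.1.IsParabolic}.ncard + Nat.card (center H)) =
      Nat.card H * Nat.card (center H) *
        (Nat.card (centralizer {x}) + Nat.card (centralizer {y})) :=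
  (hasAbelianCentralizers.subgroup H).two_mul_card_mul_card_mul_ncard_add hxy.not_commute_conj
    hxy.weylIndex_left_eq_two hxy.weylIndex_right_eq_two fun _ ↦ hxy.isParabolic_iff_notMem

theorem ncard_isParabolic_pos (hxy : IsLargeTorusPair x.1 y.1) :
    0 < {u : H | u.1.1.IsParabolic}.ncard := by
  by_contra! hU
  have heq := hxy.classEquation
  have hindex : (centralizer {x}).index ≠ 1 := fun h ↦
    hxy.notMem_center_left (by simpa [centralizer_eq_top_iff_subset] using index_eq_one.1 h)
  have hmul := (centralizer {x}).card_mul_index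
  have hle : 2 * Nat.card (centralizer {x}) ≤ Nat.card H := by
    have := (centralizer {x}).index_ne_zero_of_finite
    nlinarith [show 2 ≤ (centralizer {x}).index by lia]
  have hz : 0 < Nat.card (center H) := Nat.card_pos
  have hc : 0 < Nat.card (centralizer {x}) := Nat.card_pos
  rw [Nat.le_zero.1 hU, zero_add] at heq
  have heq' : 2 * Nat.card (centralizer {x}) * Nat.card (centralizer {y}) =
      Nat.card H * (Nat.card (centralizer {x}) + Nat.card (centralizer {y})) :=
    Nat.eq_of_mul_eq_mul_right hz (by rw [heq]; ring)
  nlinarith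

theorem twenty_mul_le_card (hxy : IsLargeTorusPair x.1 y.1) :
    20 * ({u : H | u.1.1.IsParabolic}.ncard + Nat.card (center H)) ≤ Nat.card H := by
  have hx := hxy.mul_card_center_le_card_centralizer hxy.le_orderOf_left
  have hy := hxy.mul_card_center_le_card_centralizer hxy.le_orderOf_right
  have heq := hxy.classEquation
  have hc : 0 < Nat.card (centralizer {x}) := Nat.card_pos
  have hd : 0 < Nat.card (centralizer {y}) := Nat.card_pos
  have hx' := Nat.mul_le_mul_left (Nat.card H * Nat.card (centralizer {y})) hx
  have hy' := Nat.mul_le_mul_left (Nat.card H * Nat.card (centralizer {x})) hy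
  refine Nat.le_of_mul_le_mul_left ?_ (Nat.mul_pos (Nat.mul_pos two_pos hc) hd)
  linarith [congrArg (20 * ·) heq]

end IsLargeTorusPair

end LargeTorusPair

section ClassEquation

variable {F : Type*} [Field F] {H : Subgroup SL(2, F)} {x y u : H}

theorem card_centralizer_eq_card_diagonalGroup {b : H} (hb : b.1 ∈ borel F)
    (htr : b.1.1.trace ^ 2 ≠ 4) {a : Fˣ} (ha : b.1 0 0 = a) (hgen : diagonalGroup H = zpowers a) :
    Nat.card (centralizer {b}) = Nat.card (diagonalGroup H) := by
  have hcomm (c : centralizer {b}) : Commute c.1.1 b.1 :=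
    congrArg Subtype.val (mem_centralizer_singleton_iff.1 c.2)
  have hborel (c : centralizer {b}) : c.1.1 ∈ borel F :=
    mem_borel_of_commute hb (notMem_center_of_trace_sq_ne htr) (hcomm c)
  let χ : centralizer {b} →* Fˣ := (borelCharacter F).comp
    ((H.subtype.comp (centralizer {b}).subtype).codRestrict (borel F) hborel)
  have hinj : Function.Injective χ := by
    rw [injective_iff_map_eq_one]
    intro c hc
    have hc₀₀ : c.1.1 0 0 = 1 := congrArg Units.val hc
    have hct := eq_upperTransvection (hborel c) hc₀₀
    have hconj := conj_upperTransvection hb (c.1.1 0 1)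
    rw [← hct, ← (hcomm c).eq, mul_inv_cancel_right, hct] at hconj
    have ht := upperTransvection_injective hconj
    have hsq : b.1 0 0 ^ 2 ≠ 1 := (trace_sq_eq_four_iff_of_mem_borel hb).not.1 htr
    have ht₀ : c.1.1 0 1 = 0 := by grind
    exact Subtype.ext (Subtype.ext (by simpa [ht₀] using hct))
  have hrange : χ.range = diagonalGroup H := by
    apply le_antisymm
    · rintro - ⟨c, rfl⟩
      exact mem_diagonalGroup.2 ⟨c.1, c.1.2, hborel c, rfl⟩
    · rw [hgen, zpowers_le]
      exact ⟨⟨b, mem_centralizer_singleton_iff.2 rfl⟩, Units.ext ha⟩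
  rw [← hrange, Nat.card_congr (MonoidHom.ofInjective hinj).toEquiv]

theorem ncard_isParabolic [Finite F]
    (hpar : ∀ u : H, u.1.1.IsParabolic → ∃ h : H, (h * u * h⁻¹).1 ∈ borel F) :
    {u : H | u.1.1.IsParabolic}.ncard = ((borel F).subgroupOf H).index *
      (Nat.card ((center SL(2, F)).subgroupOf H) * (Nat.card (translations H) - 1)) := by
  rw [← ncard_isParabolic_mem_borel, ← ncard_conjugatesOfSet_eq_index_mul_ncard]
  · congr 1
    ext u
    simp only [Group.mem_conjugatesOfSet_iff, isConj_iff, Set.mem_ofPred_eq]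
    constructor
    · intro hu
      obtain ⟨h, hh⟩ := hpar u hu
      exact ⟨h * u * h⁻¹, ⟨(isParabolic_conj h.1).2 hu, hh⟩, h⁻¹, by group⟩
    · rintro ⟨d, ⟨hd, -⟩, h, rfl⟩
      exact (isParabolic_conj h.1).2 hd
  · rintro d ⟨hd, hdb⟩ h
    obtain ⟨hdc, htr⟩ := isParabolic_iff.1 hd
    rw [mem_subgroupOf]
    exact ⟨fun hh ↦ mem_borel_of_conj_mem_borel hdb hdc htr hh.2, fun hh ↦
      ⟨(isParabolic_conj h.1).2 hd, mul_mem (mul_mem hh hdb) (inv_mem hh)⟩⟩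

/-- A subgroup of index two is normal, whereas the Borel subgroup is self-normalizing. -/
theorem three_le_index_borel [Finite F] (hu : u.1.1.IsParabolic) (hub : u.1 ∈ borel F)
    (hy : y.1 ∉ borel F) : 3 ≤ ((borel F).subgroupOf H).index := by
  have h₀ := ((borel F).subgroupOf H).index_ne_zero_of_finite
  have h₁ : ((borel F).subgroupOf H).index ≠ 1 := fun h ↦
    hy (mem_subgroupOf.1 (index_eq_one.1 h ▸ mem_top y))
  have h₂ : ((borel F).subgroupOf H).index ≠ 2 := fun h ↦ by
    have := normal_of_index_eq_two h
    obtain ⟨huc, htr⟩ := isParabolic_iff.1 hu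
    exact hy (mem_borel_of_conj_mem_borel hub huc htr
      (Normal.conj_mem this u (mem_subgroupOf.2 hub) y))
  lia

variable (H) in
theorem card_eq_index_borel_mul : Nat.card H = ((borel F).subgroupOf H).index *
    (Nat.card (diagonalGroup H) * Nat.card (translations H)) := by
  rw [← card_borel_subgroupOf, mul_comm, card_mul_index]

namespace IsLargeTorusPair

variable [Finite F]

theorem two_le_card_translations (hxy : IsLargeTorusPair x.1 y.1)
    (hpar : ∀ u : H, u.1.1.IsParabolic → ∃ h : H, (h * u * h⁻¹).1 ∈ borel F) :
    2 ≤ Nat.card (translations H) := by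
  have hpos := hxy.ncard_isParabolic_pos
  rw [ncard_isParabolic hpar] at hpos
  have := Nat.pos_of_mul_pos_left (Nat.pos_of_mul_pos_left hpos)
  lia

theorem three_le_index_borel (hxy : IsLargeTorusPair x.1 y.1)
    (hpar : ∀ u : H, u.1.1.IsParabolic → ∃ h : H, (h * u * h⁻¹).1 ∈ borel F) :
    3 ≤ ((borel F).subgroupOf H).index := by
  obtain ⟨u, hu⟩ := Set.nonempty_of_ncard_ne_zero hxy.ncard_isParabolic_pos.ne'
  obtain ⟨h, hh⟩ := hpar u hu
  exact SLTwo.three_le_index_borel ((isParabolic_conj h.1).2 hu) hh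
    (mt isSplit_of_mem_borel hxy.not_isSplit_right)

theorem card_diagonalGroup_ne (hxy : IsLargeTorusPair x.1 y.1)
    (hpar : ∀ u : H, u.1.1.IsParabolic → ∃ h : H, (h * u * h⁻¹).1 ∈ borel F) :
    Nat.card (diagonalGroup H) ≠ Nat.card (center H) := by
  intro hk
  have hle := hxy.twenty_mul_le_card
  rw [ncard_isParabolic hpar, card_eq_index_borel_mul, hk, ← hxy.center_eq] at hle
  obtain ⟨r, hr⟩ := Nat.exists_eq_add_of_le (hxy.two_le_card_translations hpar)
  have hN := hxy.three_le_index_borel hpar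
  have hz : 0 < Nat.card (center H) := Nat.card_pos
  rw [hr, show 2 + r - 1 = r + 1 by lia] at hle
  have hNz := Nat.mul_pos (zero_lt_three.trans_le hN) hz
  nlinarith

theorem card_centralizer_left (hxy : IsLargeTorusPair x.1 y.1)
    (hpar : ∀ u : H, u.1.1.IsParabolic → ∃ h : H, (h * u * h⁻¹).1 ∈ borel F) :
    Nat.card (centralizer {x}) = Nat.card (diagonalGroup H) := by
  obtain ⟨a, hgen⟩ := (diagonalGroup H).isCyclic_iff_exists_zpowers_eq_top.1 inferInstance
  obtain ⟨b, hbH, hb, hab⟩ := mem_diagonalGroup.1 (hgen ▸ mem_zpowers a)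
  have htr : b.1.trace ^ 2 ≠ 4 := by
    refine fun htr ↦ hxy.card_diagonalGroup_ne hpar ?_
    have hsq := (trace_sq_eq_four_iff_of_mem_borel hb).1 htr
    have hmap : (diagonalGroup H).map (powMonoidHom 2) = ⊥ := by
      rw [← hgen, MonoidHom.map_zpowers, zpowers_eq_bot]
      exact Units.ext (by simpa [hab] using hsq)
    rw [card_diagonalGroup, hmap, card_bot, one_mul, hxy.center_eq]
  have hbc : (⟨b, hbH⟩ : H) ∉ center H := by
    rw [hxy.center_eq, mem_subgroupOf]
    exact notMem_center_of_trace_sq_ne htr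
  have hmem : (⟨b, hbH⟩ : H) ∈ centralizerConjugates x := by
    refine (hxy.mem_centralizerConjugates hbc htr).resolve_right fun hby ↦ ?_
    obtain ⟨-, h, hcomm⟩ := mem_centralizerConjugates_iff.1 hby
    exact not_commute_conj_of_isSplit_of_not_isSplit (isSplit_of_mem_borel hb)
      (notMem_center_of_trace_sq_ne htr) hxy.not_isSplit_right h (congrArg Subtype.val hcomm)
  rw [← (hasAbelianCentralizers.subgroup H).card_centralizer_of_mem_centralizerConjugates
    hxy.notMem_center_left hmem]
  exact card_centralizer_eq_card_diagonalGroup hb htr hab hgen.symm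

/-- The possible orders of the two tori are those in `SL(2, Q)` and, for odd `Q`, in its quotient
by the center. -/
theorem card_centralizer_eq (hxy : IsLargeTorusPair x.1 y.1)
    (hpar : ∀ u : H, u.1.1.IsParabolic → ∃ h : H, (h * u * h⁻¹).1 ∈ borel F) :
    ∃ s g, s ∣ Nat.card Fˣ ∧
      Nat.card (centralizer {x}) = s * Nat.card (center H) ∧
      Nat.card (centralizer {y}) = g * Nat.card (center H) ∧
      (s = Nat.card (translations H) - 1 ∧ g = Nat.card (translations H) + 1 ∨
        2 * s = Nat.card (translations H) - 1 ∧ 2 * g = Nat.card (translations H) + 1) := by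
  have hc := hxy.card_centralizer_left hpar
  have hk := card_diagonalGroup (H := H)
  rw [← hxy.center_eq] at hk
  obtain ⟨g, hg⟩ : Nat.card (center H) ∣ Nat.card (centralizer {y}) :=
    card_dvd_of_le (center_le_centralizer _)
  rw [mul_comm] at hg
  refine ⟨_, g, card_subgroup_dvd_card _, hc.trans hk, hg, ?_⟩
  have hz : 0 < Nat.card (center H) := Nat.card_pos
  have heq := hxy.classEquation
  rw [ncard_isParabolic hpar, card_eq_index_borel_mul, hc, hk, hg, ← hxy.center_eq] at heq
  have hs := (hxy.mul_card_center_le_card_centralizer hxy.le_orderOf_left).trans_eq (hc.trans hk)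
  obtain ⟨r, hr⟩ := Nat.exists_eq_add_of_le' (hxy.two_le_card_translations hpar)
  have hdvd := card_diagonalGroup_sq_dvd (H := H)
  rw [hr, show r + 2 - 1 = r + 1 by lia] at heq hdvd ⊢
  set s := Nat.card ((diagonalGroup H).map (powMonoidHom 2))
  set z := Nat.card (center H)
  set N := ((borel F).subgroupOf H).index
  have hs₂₀ : 20 ≤ s := Nat.le_of_mul_le_mul_right hs hz
  have hclass : 2 * g * (N * (r + 1) + 1) = N * (r + 1 + 1) * (s + g) := by
    have hpos : 0 < s * z ^ 3 := by positivity
    exact Nat.eq_of_mul_eq_mul_right hpos (by linear_combination heq)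
  have := eq_or_two_mul_eq_of_classEquation (hxy.three_le_index_borel hpar) hs₂₀ r.succ_pos hdvd
    hclass
  lia

end IsLargeTorusPair

end ClassEquation

end SLTwo

theorem dvd_of_dvd_pow_sub_one {p m e s : ℕ} (hp : 2 ≤ p) (hm : 0 < m) (hs : p ^ m - 1 ≤ 2 * s)
    (hsm : s ∣ p ^ m - 1) (hse : s ∣ p ^ e - 1) : m ∣ e := by
  have hpow (i : ℕ) : 1 ≤ p ^ i := Nat.one_le_pow _ _ (by lia)
  have hm₁ : p ^ m ≡ 1 [MOD s] := ((Nat.modEq_iff_dvd' (hpow m)).2 hsm).symm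
  have he₁ : p ^ e ≡ 1 [MOD s] := ((Nat.modEq_iff_dvd' (hpow e)).2 hse).symm
  have hr : p ^ (e % m) ≡ 1 [MOD s] := by
    have hmul := (hm₁.pow (e / m)).mul_right (p ^ (e % m))
    rw [← pow_mul, ← pow_add, Nat.div_add_mod, one_pow, one_mul] at hmul
    exact hmul.symm.trans he₁
  rw [Nat.dvd_iff_mod_eq_zero]
  by_contra hne
  have hlt : p ^ (e % m) * 2 ≤ p ^ m :=
    (Nat.mul_le_mul_left _ hp).trans (Nat.pow_le_pow_right (by lia) (Nat.mod_lt e hm))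
  have hle : s ≤ p ^ (e % m) - 1 := Nat.le_of_dvd (Nat.sub_pos_of_lt (Nat.one_lt_pow hne hp))
    ((Nat.modEq_iff_dvd' (hpow _)).1 hr.symm)
  have := hpow (e % m)
  lia

theorem pow_eq_one_of_card_centralizer_dvd {Γ : Type*} [Group Γ] {v : Γ} {k : ℕ}
    (h : Nat.card (Subgroup.centralizer {v}) ∣ k) : v ^ k = 1 :=
  orderOf_dvd_iff_pow_eq_one.1
    ((Subgroup.orderOf_dvd_natCard _ (Subgroup.mem_centralizer_singleton_iff.2 rfl)).trans h)

namespace SLTwo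

open Subgroup
open scoped MatrixGroups

section Dickson

variable {F : Type*} [Field F] [Finite F] {H : Subgroup SL(2, F)}

theorem IsLargeTorusPair.mul_card_center_dvd {x y : H} (hxy : IsLargeTorusPair x.1 y.1)
    {s r : ℕ} (h : s = r ∨ 2 * s = r) : s * Nat.card (center H) ∣ 2 * r := by
  have hz : Nat.card (center H) ∣ 2 := by
    have := hxy.card_center_le
    have : 0 < Nat.card (center H) := Nat.card_pos
    exact (Nat.dvd_prime Nat.prime_two).2 (by lia)
  rcases h with rfl | rfl
  · rw [mul_comm]
    exact mul_dvd_mul_right hz s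
  · exact (mul_dvd_mul_left s hz).trans ⟨2, by ring⟩

/-- A weak form of Dickson's classification: the exceptional case is that of the conjugates of
`SL(2, p ^ m)` and of their extensions by scalars, for a proper subfield of `F`. -/
theorem IsLargeTorusPair.eq_top_or_exists_pow_eq_one_of_conj_mem_borel {x y : H}
    (hxy : IsLargeTorusPair x.1 y.1)
    (hpar : ∀ u : H, u.1.1.IsParabolic → ∃ h : H, (h * u * h⁻¹).1 ∈ borel F)
    (p : ℕ) [CharP F p] : H = ⊤ ∨ ∃ m, 0 < m ∧ (p ^ m) ^ 2 ≤ Nat.card F ∧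
      x.1 ^ (2 * (p ^ m - 1)) = 1 ∧ y.1 ^ (2 * (p ^ m + 1)) = 1 := by
  obtain ⟨s, g, hsF, hx, hy, hsg⟩ := hxy.card_centralizer_eq hpar
  have := Fintype.ofFinite F
  obtain ⟨e, hp, he⟩ := FiniteField.card F p
  rw [← Nat.card_eq_fintype_card] at he
  have hQ₂ := hxy.two_le_card_translations hpar
  obtain ⟨m, hme, hm⟩ := (Nat.dvd_prime_pow hp).1
    (he ▸ AddSubgroup.card_addSubgroup_dvd_card (translations H))
  rw [hm] at hsg hQ₂
  have hm₀ : 0 < m := Nat.pos_of_ne_zero fun h ↦ by simp [h] at hQ₂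
  have hsm : s ∣ p ^ m - 1 := by
    rcases hsg with ⟨hs, -⟩ | ⟨hs, -⟩
    · exact hs ▸ dvd_rfl
    · exact hs ▸ dvd_mul_left _ _
  have hse : s ∣ p ^ (e : ℕ) - 1 := by rwa [Nat.card_units, he] at hsF
  obtain ⟨j, hj⟩ : m ∣ e := dvd_of_dvd_pow_sub_one hp.two_le hm₀ (by lia) hsm hse
  have hj₀ : 0 < j := Nat.pos_of_mul_pos_left (hj ▸ e.pos)
  obtain rfl | hj₂ : j = 1 ∨ 2 ≤ j := by lia
  · left
    have htop : translations H = ⊤ := AddSubgroup.eq_top_of_card_eq _ (by rw [hm, he, hj, mul_one])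
    refine eq_top_of_upperTransvection_mem (fun t ↦ mem_translations.1 ?_) y.2
      (mt isSplit_of_mem_borel hxy.not_isSplit_right)
    exact htop ▸ AddSubgroup.mem_top t
  · refine Or.inr ⟨m, hm₀, ?_, ?_, ?_⟩
    · rw [he, hj, pow_mul]
      exact Nat.pow_le_pow_right (one_le_two.trans hQ₂) hj₂
    · have hx₁ := pow_eq_one_of_card_centralizer_dvd
        (hx ▸ hxy.mul_card_center_dvd (hsg.imp And.left And.left))
      exact congrArg Subtype.val hx₁
    · have hy₁ := pow_eq_one_of_card_centralizer_dvd
        (hy ▸ hxy.mul_card_center_dvd (hsg.imp And.right And.right))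
      exact congrArg Subtype.val hy₁

theorem IsLargeTorusPair.eq_top_or_exists_pow_eq_one {x y : SL(2, F)}
    (hxy : IsLargeTorusPair x y) (hx : x ∈ H) (hy : y ∈ H) (p : ℕ) [CharP F p] :
    H = ⊤ ∨ ∃ m, 0 < m ∧ (p ^ m) ^ 2 ≤ Nat.card F ∧
      x ^ (2 * (p ^ m - 1)) = 1 ∧ y ^ (2 * (p ^ m + 1)) = 1 := by
  obtain ⟨g, hg⟩ := exists_forall_isParabolic_conj_mem_borel H
  let c := MulAut.conj g
  have hpar : ∀ u : H.map c.toMonoidHom, u.1.1.IsParabolic →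
      ∃ h : H.map c.toMonoidHom, (h * u * h⁻¹).1 ∈ borel F := by
    rintro ⟨-, v, hv, rfl⟩ hu
    obtain ⟨h, hh, hb⟩ := hg v hv ((isParabolic_conj g).1 hu)
    refine ⟨⟨c h, h, hh, rfl⟩, ?_⟩
    change c h * c v * (c h)⁻¹ ∈ borel F
    rwa [← map_inv, ← map_mul, ← map_mul]
  have := IsLargeTorusPair.eq_top_or_exists_pow_eq_one_of_conj_mem_borel
    (x := (⟨c x, mem_map_of_mem _ hx⟩ : H.map c.toMonoidHom))
    (y := (⟨c y, mem_map_of_mem _ hy⟩ : H.map c.toMonoidHom)) (hxy.conj g g) hpar p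
  simp_rw [← map_pow, EmbeddingLike.map_eq_one_iff] at this
  refine this.imp_left fun htop ↦ ?_
  rwa [← map_top_of_surjective c.toMonoidHom c.surjective,
    (map_injective c.injective).eq_iff] at htop

end Dickson

end SLTwo

theorem abs_sub_sq_div_two_le {a b e i k n : ℕ} (ha : n ≤ 2 * a + k) (hb : n ≤ 2 * b + k)
    (hupper : i + a ^ 2 + b ^ 2 ≤ n ^ 2) (hlower : 2 * (a * b) ≤ i + 2 * e) :
    |(i : ℝ) - (n : ℝ) ^ 2 / 2| ≤ (k : ℝ) * n + 2 * e := by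
  have hupper₂ : 2 * i ≤ n ^ 2 + 2 * (k * n) := by
    zify at *
    nlinarith [sq_nonneg (2 * a - n : ℤ), sq_nonneg (2 * b - n : ℤ)]
  have hlower₂ : n ^ 2 ≤ 2 * i + 2 * (k * n) + 4 * e := by
    obtain hnk | ⟨m, rfl⟩ : n ≤ k ∨ ∃ m, n = k + m :=
      (le_total n k).imp_right Nat.exists_eq_add_of_le
    · nlinarith
    · nlinarith [Nat.mul_le_mul (show m ≤ 2 * a by lia) (show m ≤ 2 * b by lia)]
  have hupper₃ : (2 * i : ℝ) ≤ n ^ 2 + 2 * (k * n) := mod_cast hupper₂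
  have hlower₃ : (n ^ 2 : ℝ) ≤ 2 * i + 2 * (k * n) + 4 * e := mod_cast hlower₂
  rw [abs_le]
  constructor <;> linarith

section InvGen

open Subgroup

variable {G : Type*} [Group G] {x y s t : G}

theorem invGen_comm : InvGen x y ↔ InvGen y x := by
  unfold InvGen
  rw [forall_comm]
  simp only [Set.pair_comm]

theorem not_invGen_of_commute_conj (hx : x ∉ center G) {h : G} (hxy : Commute x (h * y * h⁻¹)) :
    ¬InvGen x y := by
  intro hgen
  have htop : centralizer {x} = ⊤ := by
    rw [eq_top_iff, ← hgen 1 h, closure_le, Set.insert_subset_iff, Set.singleton_subset_iff]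
    simp only [one_mul, inv_one, mul_one, SetLike.mem_coe, mem_centralizer_singleton_iff]
    exact ⟨trivial, hxy.symm⟩
  refine hx (mem_center_iff.2 fun g ↦ mem_centralizer_singleton_iff.1 ?_)
  exact htop ▸ mem_top g

theorem two_mul_ncard_mul_ncard_le [Finite G] {A B : Set G} (hAB : Disjoint A B) :
    2 * (A.ncard * B.ncard) ≤ {p : G × G | InvGen p.1 p.2}.ncard +
      2 * {p ∈ A ×ˢ B | ¬InvGen p.1 p.2}.ncard := by
  let I : Set (G × G) := {p ∈ A ×ˢ B | InvGen p.1 p.2}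
  have hsplit : A.ncard * B.ncard ≤ I.ncard + {p ∈ A ×ˢ B | ¬InvGen p.1 p.2}.ncard := by
    rw [← Set.ncard_prod]
    refine (Set.ncard_le_ncard fun p hp ↦ ?_).trans (Set.ncard_union_le _ _)
    exact (em (InvGen p.1 p.2)).imp (⟨hp, ·⟩) (⟨hp, ·⟩)
  have hdisj : Disjoint I (Prod.swap '' I) := by
    rw [Set.disjoint_left]
    rintro - hp ⟨q, hq, rfl⟩
    exact Set.disjoint_left.1 hAB hq.1.1 hp.1.2
  have hle : I.ncard + I.ncard ≤ {p : G × G | InvGen p.1 p.2}.ncard := by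
    nth_rw 2 [← Set.ncard_image_of_injective I Prod.swap_injective]
    rw [← Set.ncard_union_eq hdisj]
    refine Set.ncard_le_ncard (Set.union_subset (fun p hp ↦ hp.2) ?_)
    rintro - ⟨q, hq, rfl⟩
    exact invGen_comm.1 hq.2
  lia

namespace HasAbelianCentralizers

theorem not_invGen_of_mem_centralizerConjugates (hG : HasAbelianCentralizers G)
    (hx : x ∉ center G) (hs : s ∈ centralizerConjugates x) (ht : t ∈ centralizerConjugates x) :
    ¬InvGen s t := by
  obtain ⟨hsc, g, hsx⟩ := mem_centralizerConjugates_iff.1 hs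
  obtain ⟨-, h, htx⟩ := mem_centralizerConjugates_iff.1 ht
  have htx' := (Commute.conj_iff (g * h⁻¹)).2 htx
  refine not_invGen_of_commute_conj hsc (h := g * h⁻¹)
    (hG (conj_mem_center_iff.not.2 hx) hsx ?_)
  simpa [mul_assoc] using htx'

variable [Finite G]

theorem ncard_invGen_add_le (hG : HasAbelianCentralizers G)
    (hxy : ∀ h, ¬Commute x (h * y * h⁻¹)) :
    {p : G × G | InvGen p.1 p.2}.ncard + (centralizerConjugates x).ncard ^ 2 +
      (centralizerConjugates y).ncard ^ 2 ≤ Nat.card G ^ 2 := by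
  set A := centralizerConjugates x
  set B := centralizerConjugates y
  have hAB : Disjoint A B := hG.disjoint_centralizerConjugates hxy
  have hdisj : Disjoint (A ×ˢ A) (B ×ˢ B) := Set.disjoint_prod.2 (Or.inl hAB)
  have hgen : Disjoint {p : G × G | InvGen p.1 p.2} (A ×ˢ A ∪ B ×ˢ B) := by
    rw [Set.disjoint_right]
    rintro p (hp | hp)
    · exact hG.not_invGen_of_mem_centralizerConjugates
        (notMem_center_of_not_commute_conj hxy) hp.1 hp.2
    · exact hG.not_invGen_of_mem_centralizerConjugates
        (notMem_center_of_not_commute_conj (not_commute_conj_symm hxy)) hp.1 hp.2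
  rw [sq, sq, sq, ← Set.ncard_prod, ← Set.ncard_prod, add_assoc, ← Set.ncard_union_eq hdisj,
    ← Set.ncard_union_eq hgen, ← Nat.card_prod]
  exact Set.ncard_le_card _

theorem card_le_two_mul_ncard_centralizerConjugates_add (hG : HasAbelianCentralizers G)
    (hx : x ∉ center G) (hwx : weylIndex x ≤ 2) :
    Nat.card G ≤ 2 * (centralizerConjugates x).ncard +
      Nat.card (center G) * (conjugatesOf x).ncard := by
  have hcard := hG.ncard_centralizerConjugates hx
  have hle := Nat.mul_le_mul_right (centralizerConjugates x).ncard hwx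
  refine Nat.le_of_mul_le_mul_right ?_ (Nat.card_pos (α := centralizer {x}))
  rw [ncard_conjugatesOf_eq_index_centralizer]
  have hindex := (centralizer {x}).card_mul_index
  rw [← hindex] at hcard
  nlinarith

/-- Each of the two families of conjugate centralizers fills half of `G`, and an invariably
generating pair cannot lie in a single one of them. -/
theorem abs_ncard_invGen_sub_le (hG : HasAbelianCentralizers G)
    (hxy : ∀ h, ¬Commute x (h * y * h⁻¹)) (hwx : weylIndex x ≤ 2) (hwy : weylIndex y ≤ 2) {k : ℕ}
    (hkx : Nat.card (center G) * (conjugatesOf x).ncard ≤ k)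
    (hky : Nat.card (center G) * (conjugatesOf y).ncard ≤ k) :
    |({p : G × G | InvGen p.1 p.2}.ncard : ℝ) - (Nat.card G : ℝ) ^ 2 / 2| ≤ (k : ℝ) * Nat.card G +
      2 * ({p ∈ centralizerConjugates x ×ˢ centralizerConjugates y |
        ¬InvGen p.1 p.2}.ncard : ℝ) := by
  have hx := hG.card_le_two_mul_ncard_centralizerConjugates_add
    (notMem_center_of_not_commute_conj hxy) hwx
  have hy := hG.card_le_two_mul_ncard_centralizerConjugates_add
    (notMem_center_of_not_commute_conj (not_commute_conj_symm hxy)) hwy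
  have hupper := hG.ncard_invGen_add_le hxy
  have hlower := two_mul_ncard_mul_ncard_le (hG.disjoint_centralizerConjugates hxy)
  exact abs_sub_sq_div_two_le (hx.trans (Nat.add_le_add_left hkx _))
    (hy.trans (Nat.add_le_add_left hky _)) hupper hlower

end HasAbelianCentralizers

end InvGen

namespace SLTwo

open Subgroup
open scoped MatrixGroups

section Counting

variable {F : Type*} [Field F]

theorem exists_trace_eq (t : F) : ∃ M : SL(2, F), M.1.trace = t :=
  ⟨⟨!![0, -1; 1, t], by simp [Matrix.det_fin_two]⟩, by simp [Matrix.trace_fin_two]⟩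

theorem exists_isSplit_trace_sq_ne (hF : 3 < Nat.card F) :
    ∃ M : SL(2, F), IsSplit M ∧ M.1.trace ^ 2 ≠ 4 := by
  obtain ⟨a, ha⟩ : ∃ a : Fˣ, a ^ 2 ≠ 1 := by
    by_contra! h
    have htop : rootsOfUnity 2 F = ⊤ := eq_top_iff.2 fun a _ ↦ (mem_rootsOfUnity 2 a).2 (h a)
    have hcard := card_rootsOfUnity F 2
    rw [htop, card_top, Nat.card_units] at hcard
    lia
  obtain ⟨M, hM⟩ := exists_trace_eq ((a : F) + (a⁻¹ : Fˣ))
  refine ⟨M, ⟨a, hM.symm⟩, fun h4 ↦ ha ?_⟩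
  have hinv := a.mul_inv
  have hsub : (a : F) - (a⁻¹ : Fˣ) = 0 :=
    sq_eq_zero_iff.1 (by rw [hM] at h4; linear_combination h4 - 4 * hinv)
  ext
  rw [Units.val_pow_eq_pow_val, Units.val_one]
  linear_combination hinv + a * hsub

theorem exists_rootsOfUnity_trace_eq (K : Type*) [Field K] [Algebra F K] [IsAlgClosed K]
    {M : SL(2, F)} {n : ℕ} (hM : M ^ n = 1) :
    ∃ a : rootsOfUnity n K, algebraMap F K M.1.trace = a.1 + (a.1⁻¹ : Kˣ) := by
  let N : SL(2, K) := M.map (algebraMap F K)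
  obtain ⟨r, hr⟩ := spectrum.nonempty_of_isAlgClosed_of_finiteDimensional K N.1
  have hpow : r ^ n = 1 := by
    have hN : N.1 ^ n = 1 := by
      rw [← Matrix.SpecialLinearGroup.coe_pow, ← map_pow, hM, map_one,
        Matrix.SpecialLinearGroup.coe_one]
    have hrn := spectrum.pow_mem_pow N.1 n hr
    rwa [hN, spectrum.one_eq] at hrn
  have hchar : r ^ 2 - N.1.trace * r + 1 = 0 := by
    have hroot := Matrix.mem_spectrum_iff_isRoot_charpoly.1 hr
    simpa [Matrix.charpoly_fin_two] using hroot
  have htrace : N.1.trace = algebraMap F K M.1.trace := by simp [N, Matrix.trace_fin_two]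
  have hr₀ : r ≠ 0 := by rintro rfl; simp at hchar
  refine ⟨⟨Units.mk0 r hr₀, (mem_rootsOfUnity _ _).2 (Units.ext hpow)⟩, ?_⟩
  simp only [Units.val_inv_eq_inv_val, Units.val_mk0]
  field_simp
  linear_combination -hchar - r * htrace

theorem ncard_image_trace_setOf_pow_eq_one_le {n : ℕ} (hn : 0 < n) :
    ((fun M : SL(2, F) ↦ M.1.trace) '' {M | M ^ n = 1}).ncard ≤ n := by
  have : NeZero n := ⟨hn.ne'⟩
  have hroot : ∀ t : (fun M : SL(2, F) ↦ M.1.trace) '' {M | M ^ n = 1},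
      ∃ a : rootsOfUnity n (AlgebraicClosure F),
        algebraMap F (AlgebraicClosure F) t = a.1 + (a.1⁻¹ : (AlgebraicClosure F)ˣ) := by
    rintro ⟨-, M, hM, rfl⟩
    exact exists_rootsOfUnity_trace_eq _ hM
  choose f hf using hroot
  have hinj : f.Injective := fun t u h ↦
    Subtype.ext ((algebraMap F (AlgebraicClosure F)).injective (by rw [hf, hf, h]))
  rw [← Nat.card_coe_set_eq]
  exact (Nat.card_le_card_of_injective f hinj).trans (card_rootsOfUnity _ n)

variable [Finite F]

variable (F) in
theorem card_sq_mul_card_sub_one_le :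
    Nat.card F ^ 2 * (Nat.card F - 1) ≤ Nat.card SL(2, F) := by
  let f : F × F × Fˣ → SL(2, F) := fun p ↦
    ⟨!![(p.2.2 : F), p.1; p.2.1, (p.2.2⁻¹ : Fˣ) * (1 + p.1 * p.2.1)], by
      simp [Matrix.det_fin_two]⟩
  have hf : f.Injective := by
    rintro ⟨b, c, a⟩ ⟨b', c', a'⟩ h
    have hentry (i j : Fin 2) : f (b, c, a) i j = f (b', c', a') i j := by rw [h]
    have h₀₀ : (a : F) = a' := hentry 0 0
    have h₀₁ : b = b' := hentry 0 1
    have h₁₀ : c = c' := hentry 1 0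
    rw [h₀₁, h₁₀, Units.ext h₀₀]
  have hcard := Nat.card_le_card_of_injective f hf
  rwa [Nat.card_prod, Nat.card_prod, Nat.card_units, ← mul_assoc, ← sq] at hcard

variable (F) in
theorem card_pow_three_le : Nat.card F ^ 3 ≤ 2 * Nat.card SL(2, F) := by
  have hq : 1 < Nat.card F := Finite.one_lt_card
  calc Nat.card F ^ 3 = Nat.card F ^ 2 * Nat.card F := pow_succ _ _
    _ ≤ Nat.card F ^ 2 * (2 * (Nat.card F - 1)) := Nat.mul_le_mul_left _ (by lia)
    _ = 2 * (Nat.card F ^ 2 * (Nat.card F - 1)) := Nat.mul_left_comm _ _ _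
    _ ≤ 2 * Nat.card SL(2, F) := Nat.mul_le_mul_left _ (card_sq_mul_card_sub_one_le F)

theorem ncard_setOf_trace_eq_le (t : F) :
    {M : SL(2, F) | M.1.trace = t}.ncard ≤ 2 * Nat.card F ^ 2 := by
  classical
  let f : SL(2, F) → Bool × F × F := fun M ↦
    (decide (M 0 1 = 0), M 0 0, if M 0 1 = 0 then M 1 0 else M 0 1)
  have hf : Set.InjOn f {M | M.1.trace = t} := by
    intro M (hM : M.1.trace = t) N (hN : N.1.trace = t) hMN
    rw [trace_eq] at hM hN
    have hdetM := det_eq_one M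
    have hdetN := det_eq_one N
    simp only [f, Prod.mk.injEq, decide_eq_decide] at hMN
    obtain ⟨h₀₁, h₀₀, h⟩ := hMN
    apply ext_entries <;> grind
  rw [← hf.ncard_image]
  refine (Set.ncard_le_card _).trans_eq ?_
  simp [sq]

theorem ncard_le_mul_ncard_image_trace (S : Set SL(2, F)) :
    S.ncard ≤ ((fun M : SL(2, F) ↦ M.1.trace) '' S).ncard * (2 * Nat.card F ^ 2) := by
  classical
  have hS : S.Finite := S.toFinite
  rw [Set.ncard_eq_toFinset_card S, Set.ncard_eq_toFinset_card _, mul_comm,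
    Set.Finite.toFinset_image _ hS]
  refine Finset.card_le_mul_card_image _ _ fun t _ ↦ ?_
  refine le_trans ?_ (ncard_setOf_trace_eq_le t)
  rw [← Set.ncard_coe_finset]
  exact Set.ncard_le_ncard fun M hM ↦ (Finset.mem_filter.1 hM).2

theorem ncard_conjugatesOf_le (M : SL(2, F)) :
    (conjugatesOf M).ncard ≤ 2 * Nat.card F ^ 2 := by
  refine (Set.ncard_le_ncard fun N hN ↦ ?_).trans (ncard_setOf_trace_eq_le M.1.trace)
  obtain ⟨g, rfl⟩ := isConj_iff.1 hN
  exact trace_conj g M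

variable (F) in
theorem exists_not_isSplit : ∃ M : SL(2, F), ¬IsSplit M := by
  by_contra! h
  have hsurj : Function.Surjective fun a : Fˣ ↦ (a : F) + (a⁻¹ : Fˣ) := by
    intro t
    obtain ⟨M, rfl⟩ := exists_trace_eq t
    exact h M
  have hcard := Nat.card_le_card_of_surjective _ hsurj
  rw [Nat.card_units] at hcard
  have : 0 < Nat.card F := Nat.card_pos
  lia

theorem ncard_setOf_pow_eq_one_le {n : ℕ} (hn : 0 < n) :
    {M : SL(2, F) | M ^ n = 1}.ncard ≤ n * (2 * Nat.card F ^ 2) :=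
  (ncard_le_mul_ncard_image_trace _).trans
    (Nat.mul_le_mul_right _ (ncard_image_trace_setOf_pow_eq_one_le hn))

theorem ncard_setOf_orderOf_le_le (k : ℕ) :
    {M : SL(2, F) | orderOf M ≤ k}.ncard ≤ k.factorial * (2 * Nat.card F ^ 2) := by
  refine (Set.ncard_le_ncard fun M hM ↦ ?_).trans (ncard_setOf_pow_eq_one_le k.factorial_pos)
  exact orderOf_dvd_iff_pow_eq_one.1 (Nat.dvd_factorial (orderOf_pos M) hM)

end Counting

end SLTwo

theorem sum_range_log_pow_le {r q : ℕ} (hr : 2 ≤ r) (hq : q ≠ 0) :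
    ∑ m ∈ Finset.range (Nat.log r q + 1), r ^ m ≤ 2 * q := by
  have hlt := Nat.geomSum_lt (n := Nat.log r q) hr fun m hm ↦ Finset.mem_range.1 hm
  have hle := Nat.pow_log_le_self r hq
  rw [Finset.sum_range_succ]
  lia

theorem abs_ncard_sub_card_sq_div_two_le {α : Type*} [Finite α] (S : Set (α × α)) :
    |(S.ncard : ℝ) - (Nat.card α : ℝ) ^ 2 / 2| ≤ (Nat.card α : ℝ) ^ 2 / 2 := by
  have hle : (S.ncard : ℝ) ≤ (Nat.card α : ℝ) ^ 2 := by
    have hcard := Set.ncard_le_card S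
    rw [Nat.card_prod, ← sq] at hcard
    exact_mod_cast hcard
  rw [abs_le]
  constructor <;> linarith [S.ncard.cast_nonneg (α := ℝ)]

namespace SLTwo

open Subgroup
open scoped MatrixGroups

section Asymptotics

variable {F : Type*} [Field F] {s t x y : SL(2, F)}

theorem isSplit_of_mem_centralizerConjugates (hx : IsSplit x) (hxc : x ∉ center SL(2, F))
    (hs : s ∈ centralizerConjugates x) : IsSplit s := by
  obtain ⟨-, h, hsx⟩ := mem_centralizerConjugates_iff.1 hs
  exact ((isSplit_conj h).2 hx).of_commute (conj_mem_center_iff.not.2 hxc) hsx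

theorem not_isSplit_of_mem_centralizerConjugates (hy : ¬IsSplit y)
    (ht : t ∈ centralizerConjugates y) : ¬IsSplit t := by
  obtain ⟨htc, h, hty⟩ := mem_centralizerConjugates_iff.1 ht
  exact fun htsplit ↦ not_commute_conj_of_isSplit_of_not_isSplit htsplit htc hy h hty

theorem trace_sq_ne_of_mem_centralizerConjugates (hx : x.1.trace ^ 2 ≠ 4)
    (hs : s ∈ centralizerConjugates x) : s.1.trace ^ 2 ≠ 4 := by
  obtain ⟨hsc, h, hsx⟩ := mem_centralizerConjugates_iff.1 hs
  exact trace_sq_ne_of_commute hsc hsx.symm (by rwa [trace_conj])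

theorem weylIndex_le_two (hx : x.1.trace ^ 2 ≠ 4) : weylIndex x ≤ 2 :=
  hasAbelianCentralizers.weylIndex_le_two (notMem_center_of_trace_sq_ne hx) fun _ hcomm ↦
    eq_or_eq_inv_of_commute hx (trace_conj _ _) hcomm

variable [Finite F]

theorem IsLargeTorusPair.exists_pow_eq_one_of_not_invGen (hxy : IsLargeTorusPair x y)
    (hgen : ¬InvGen x y) (p : ℕ) [CharP F p] :
    ∃ m, 0 < m ∧ (p ^ m) ^ 2 ≤ Nat.card F ∧
      x ^ (2 * (p ^ m - 1)) = 1 ∧ y ^ (2 * (p ^ m + 1)) = 1 := by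
  simp only [InvGen, not_forall] at hgen
  obtain ⟨g, h, hgh⟩ := hgen
  simpa only [conj_pow, conj_eq_one_iff] using
    ((hxy.conj g h).eq_top_or_exists_pow_eq_one (subset_closure (Set.mem_insert _ _))
      (subset_closure (Set.mem_insert_of_mem _ (Set.mem_singleton _))) p).resolve_left hgh

theorem ncard_isLargeTorusPair_not_invGen_le :
    {P : SL(2, F) × SL(2, F) | IsLargeTorusPair P.1 P.2 ∧ ¬InvGen P.1 P.2}.ncard ≤
      32 * Nat.card F ^ 5 := by
  obtain ⟨p, _⟩ := CharP.exists F
  have hp : p.Prime := CharP.char_is_prime F p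
  set q := Nat.card F
  have hq : q ≠ 0 := Nat.card_pos.ne'
  have hp₂ : 2 ≤ p ^ 2 := hp.two_le.trans (Nat.le_self_pow two_ne_zero p)
  let X (n : ℕ) : Set SL(2, F) := {M | M ^ n = 1}
  let I : Finset ℕ := (Finset.range (Nat.log (p ^ 2) q + 1)).filter (0 < ·)
  have hcover : {P : SL(2, F) × SL(2, F) | IsLargeTorusPair P.1 P.2 ∧ ¬InvGen P.1 P.2} ⊆
      ⋃ m ∈ I, X (2 * (p ^ m - 1)) ×ˢ X (2 * (p ^ m + 1)) := by
    rintro P ⟨hP, hgen⟩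
    obtain ⟨m, hm, hmq, hx, hy⟩ := hP.exists_pow_eq_one_of_not_invGen hgen p
    have hmI : m ∈ I := by
      rw [Finset.mem_filter, Finset.mem_range, Nat.lt_succ_iff]
      exact ⟨Nat.le_log_of_pow_le hp₂ (by rwa [pow_right_comm]), hm⟩
    exact Set.mem_biUnion hmI ⟨hx, hy⟩
  have hX (m : ℕ) (hm : m ∈ I) : (X (2 * (p ^ m - 1)) ×ˢ X (2 * (p ^ m + 1))).ncard ≤
      16 * q ^ 4 * (p ^ 2) ^ m := by
    have hpm : 1 < p ^ m := Nat.one_lt_pow (Finset.mem_filter.1 hm).2.ne' hp.one_lt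
    rw [Set.ncard_prod]
    calc _ ≤ (2 * (p ^ m - 1) * (2 * q ^ 2)) * (2 * (p ^ m + 1) * (2 * q ^ 2)) :=
          Nat.mul_le_mul (ncard_setOf_pow_eq_one_le (by lia)) (ncard_setOf_pow_eq_one_le (by lia))
      _ = 16 * q ^ 4 * ((p ^ m + 1) * (p ^ m - 1)) := by ring
      _ ≤ 16 * q ^ 4 * (p ^ 2) ^ m := by
          rw [← Nat.sq_sub_sq, pow_right_comm, one_pow]
          exact Nat.mul_le_mul_left _ (Nat.sub_le _ _)
  calc _ ≤ ∑ m ∈ I, (X (2 * (p ^ m - 1)) ×ˢ X (2 * (p ^ m + 1))).ncard :=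
        (Set.ncard_le_ncard hcover).trans (I.set_ncard_biUnion_le _)
    _ ≤ ∑ m ∈ I, 16 * q ^ 4 * (p ^ 2) ^ m := Finset.sum_le_sum hX
    _ ≤ ∑ m ∈ Finset.range (Nat.log (p ^ 2) q + 1), 16 * q ^ 4 * (p ^ 2) ^ m :=
        Finset.sum_le_sum_of_subset (Finset.filter_subset _ _)
    _ ≤ 16 * q ^ 4 * (2 * q) := by
        rw [← Finset.mul_sum]
        exact Nat.mul_le_mul_left _ (sum_range_log_pow_le hp₂ hq)
    _ = 32 * q ^ 5 := by ring

theorem ncard_not_invGen_le (hx : IsSplit x) (hxtr : x.1.trace ^ 2 ≠ 4) (hy : ¬IsSplit y) :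
    {P ∈ centralizerConjugates x ×ˢ centralizerConjugates y | ¬InvGen P.1 P.2}.ncard ≤
      (64 + 4 * Nat.factorial 39) * (Nat.card F ^ 2 * Nat.card SL(2, F)) := by
  set q := Nat.card F
  set n := Nat.card SL(2, F)
  let S : Set SL(2, F) := {M | orderOf M ≤ 39}
  let L : Set (SL(2, F) × SL(2, F)) := {P | IsLargeTorusPair P.1 P.2 ∧ ¬InvGen P.1 P.2}
  have hcover : {P ∈ centralizerConjugates x ×ˢ centralizerConjugates y | ¬InvGen P.1 P.2} ⊆
      S ×ˢ Set.univ ∪ Set.univ ×ˢ S ∪ L := by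
    rintro P ⟨⟨hP₁, hP₂⟩, hgen⟩
    obtain h₁ | h₁ := le_or_gt (orderOf P.1) 39
    · exact Or.inl (Or.inl ⟨h₁, trivial⟩)
    obtain h₂ | h₂ := le_or_gt (orderOf P.2) 39
    · exact Or.inl (Or.inr ⟨trivial, h₂⟩)
    refine Or.inr ⟨⟨?_, ?_, ?_, h₁, h₂⟩, hgen⟩
    · exact isSplit_of_mem_centralizerConjugates hx (notMem_center_of_trace_sq_ne hxtr) hP₁
    · exact trace_sq_ne_of_mem_centralizerConjugates hxtr hP₁
    · exact not_isSplit_of_mem_centralizerConjugates hy hP₂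
  have hS : S.ncard ≤ Nat.factorial 39 * (2 * q ^ 2) := ncard_setOf_orderOf_le_le 39
  calc _ ≤ S.ncard * n + n * S.ncard + L.ncard := by
        refine (Set.ncard_le_ncard hcover).trans ((Set.ncard_union_le _ _).trans ?_)
        refine Nat.add_le_add_right ((Set.ncard_union_le _ _).trans_eq ?_) _
        rw [Set.ncard_prod, Set.ncard_prod, Set.ncard_univ]
    _ ≤ Nat.factorial 39 * (2 * q ^ 2) * n + n * (Nat.factorial 39 * (2 * q ^ 2)) +
          32 * (q ^ 2 * (2 * n)) := by
        gcongr
        calc L.ncard ≤ 32 * q ^ 5 := ncard_isLargeTorusPair_not_invGen_le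
          _ = 32 * (q ^ 2 * q ^ 3) := by ring
          _ ≤ 32 * (q ^ 2 * (2 * n)) := by gcongr; exact card_pow_three_le F
    _ = (64 + 4 * Nat.factorial 39) * (q ^ 2 * n) := by ring

variable (F) in
theorem abs_ncard_invGen_sub_le (hF : 3 < Nat.card F) :
    |({P : SL(2, F) × SL(2, F) | InvGen P.1 P.2}.ncard : ℝ) - (Nat.card SL(2, F) : ℝ) ^ 2 / 2| ≤
      (132 + 8 * Nat.factorial 39) * ((Nat.card F : ℝ) ^ 2 * Nat.card SL(2, F)) := by
  obtain ⟨x, hx, hxtr⟩ := exists_isSplit_trace_sq_ne hF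
  obtain ⟨y, hy⟩ := exists_not_isSplit F
  have hxy := not_commute_conj_of_isSplit_of_not_isSplit hx (notMem_center_of_trace_sq_ne hxtr) hy
  have hclass (M : SL(2, F)) :
      Nat.card (center SL(2, F)) * (conjugatesOf M).ncard ≤ 2 * (2 * Nat.card F ^ 2) :=
    Nat.mul_le_mul card_center_le_two (ncard_conjugatesOf_le M)
  have hmain := hasAbelianCentralizers.abs_ncard_invGen_sub_le hxy (weylIndex_le_two hxtr)
    (weylIndex_le_two (trace_sq_ne_of_not_isSplit hy)) (hclass x) (hclass y)
  have hbad := ncard_not_invGen_le hx hxtr hy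
  rify at hbad
  push_cast at hmain
  calc _ ≤ _ := hmain
    _ ≤ 2 * (2 * (Nat.card F : ℝ) ^ 2) * Nat.card SL(2, F) + 2 * ((64 + 4 * Nat.factorial 39) *
          ((Nat.card F : ℝ) ^ 2 * Nat.card SL(2, F))) := by gcongr
    _ = (132 + 8 * Nat.factorial 39) * ((Nat.card F : ℝ) ^ 2 * Nat.card SL(2, F)) := by ring

end Asymptotics

end SLTwo

theorem stmt_4 :
    ∃ C : ℝ, 0 < C ∧
      ∀ (F : Type) [Field F] [Fintype F],
        |(Nat.card {p : Matrix.SpecialLinearGroup (Fin 2) F ×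
              Matrix.SpecialLinearGroup (Fin 2) F // InvGen p.1 p.2} : ℝ) -
            (Nat.card (Matrix.SpecialLinearGroup (Fin 2) F) : ℝ) ^ 2 / 2| ≤
          C * (Nat.card (Matrix.SpecialLinearGroup (Fin 2) F) : ℝ) ^ 2 /
            Fintype.card F := by
  refine ⟨2 * (132 + 8 * Nat.factorial 39), by positivity, fun F _ _ ↦ ?_⟩
  rw [← Nat.card_eq_fintype_card]
  set q := Nat.card F
  set n := Nat.card (Matrix.SpecialLinearGroup (Fin 2) F)
  have hq : (0 : ℝ) < q := Nat.cast_pos.2 Nat.card_pos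
  rw [le_div_iff₀ hq]
  obtain hsmall | hlarge := le_or_gt q 3
  · have hq₃ : (q : ℝ) ≤ 3 := mod_cast hsmall
    calc _ ≤ (n : ℝ) ^ 2 / 2 * 3 := by
          gcongr; exact abs_ncard_sub_card_sq_div_two_le {p | InvGen p.1 p.2}
      _ = 3 / 2 * (n : ℝ) ^ 2 := by ring
      _ ≤ 2 * (132 + 8 * Nat.factorial 39) * (n : ℝ) ^ 2 := by
          gcongr; linarith [(Nat.factorial 39).cast_nonneg (α := ℝ)]
  · have hcube : (q : ℝ) ^ 3 ≤ 2 * n := mod_cast SLTwo.card_pow_three_le F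
    calc _ ≤ (132 + 8 * Nat.factorial 39) * ((q : ℝ) ^ 2 * n) * q := by
          gcongr; exact SLTwo.abs_ncard_invGen_sub_le F hlarge
      _ = (132 + 8 * Nat.factorial 39) * n * (q : ℝ) ^ 3 := by ring
      _ ≤ (132 + 8 * Nat.factorial 39) * n * (2 * n) := by gcongr
      _ = 2 * (132 + 8 * Nat.factorial 39) * (n : ℝ) ^ 2 := by ring
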